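/- arXiv:1505.00386 — 4 statements merged into one kernel-verified Lean document; each statement's English description precedes it below -/
import Mathlib

section
/- Let G be a connected graph that is {K_{1,3}, B_{1,1}}-free. Then G contains P_5 as an induced subgraph if and only if G belongs to P(5). -/
open SimpleGraph

def graphOfList (n : ℕ) (E : List (Fin n × Fin n)) : SimpleGraph (Fin n) :=
  SimpleGraph.fromRel (fun a b => (a, b) ∈ E)

/-- The claw `K_{1,3}`, with center `0`. -/
def K13 : SimpleGraph (Fin 4) := graphOfList 4 [(0,1), (0,2), (0,3)]

/-- `B_{1,m} = N_{1,m,0}`: a triangle `0,1,2`, a pendant vertex `3` attached to `0`,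
and a path `4,5,…,m+3` of length `m` attached at the vertex `1`. -/
def Bgraph (m : ℕ) : SimpleGraph (Fin (m + 4)) :=
  SimpleGraph.fromRel (fun a b =>
    (a.val = 0 ∧ b.val = 1) ∨ (a.val = 0 ∧ b.val = 2) ∨ (a.val = 1 ∧ b.val = 2) ∨
    (a.val = 0 ∧ b.val = 3) ∨ (a.val = 1 ∧ b.val = 4) ∨
    (4 ≤ a.val ∧ b.val = a.val + 1))

/-- `G` contains `H` as an induced subgraph. -/
def ContainsInduced {V W : Type*} (G : SimpleGraph V) (H : SimpleGraph W) : Prop :=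
  Nonempty (H ↪g G)

/-- The cliques `L 0, …, L (l-1)` form an (induced) fat `l`-path decomposition:
they are nonempty, pairwise disjoint, and two distinct vertices lying in them are adjacent
iff they lie in the same clique or in consecutive cliques. -/
def IsFatPathDecomp {V : Type*} (G : SimpleGraph V) (l : ℕ) (L : Fin l → Set V) : Prop :=
  (∀ i, (L i).Nonempty) ∧
  (∀ i j, i ≠ j → Disjoint (L i) (L j)) ∧
  (∀ (i j : Fin l) (u v : V), u ∈ L i → v ∈ L j → u ≠ v →
    (G.Adj u v ↔ i = j ∨ (i : ℕ) + 1 = (j : ℕ) ∨ (j : ℕ) + 1 = (i : ℕ)))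

/-- The cliques `L 0, …, L l` form an (induced) fat `l`-cycle decomposition:
they are nonempty, pairwise disjoint, and two distinct vertices lying in them are adjacent
iff they lie in the same clique or in (cyclically) consecutive cliques. -/
def IsFatCycleDecomp {V : Type*} (G : SimpleGraph V) (l : ℕ) (L : Fin (l + 1) → Set V) : Prop :=
  (∀ i, (L i).Nonempty) ∧
  (∀ i j, i ≠ j → Disjoint (L i) (L j)) ∧
  (∀ (i j : Fin (l + 1)) (u v : V), u ∈ L i → v ∈ L j → u ≠ v →
    (G.Adj u v ↔ i = j ∨ ((i : ℕ) + 1) % (l + 1) = (j : ℕ) ∨ ((j : ℕ) + 1) % (l + 1) = (i : ℕ)))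

/-- `G` is a fat `l`-path (so `l ≥ 5` and the fundamental cliques cover `G`). -/
def IsFatPath {V : Type*} (G : SimpleGraph V) (l : ℕ) : Prop :=
  5 ≤ l ∧ ∃ L : Fin l → Set V, IsFatPathDecomp G l L ∧ ∀ v : V, ∃ i, v ∈ L i

/-- `G` is a fat `l`-cycle (so `l ≥ 5` and the `l+1` fundamental cliques cover `G`). -/
def IsFatCycle {V : Type*} (G : SimpleGraph V) (l : ℕ) : Prop :=
  5 ≤ l ∧ ∃ L : Fin (l + 1) → Set V, IsFatCycleDecomp G l L ∧ ∀ v : V, ∃ i, v ∈ L i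

/-- `G` belongs to the family `𝒫(p)` of all fat `i`-paths and fat `i`-cycles with `i ≥ p`. -/
def MemFatFamily {V : Type*} (G : SimpleGraph V) (p : ℕ) : Prop :=
  ∃ l, p ≤ l ∧ (IsFatPath G l ∨ IsFatCycle G l)

/-
Let `p` be an induced path with at least five vertices. Freeness from the claw and from `B₁,₁`
forces every vertex to see on `p` either the closed neighbourhood of one index (possibly an index
beyond an end of `p`, when it sees one end or nothing) or exactly the two ends. In the first case
the vertex is a clone of that index. Replacing a vertex of `p` by a clone of it gives another
induced path, and applying the dichotomy to that path shows that clones of `i` and `j` are adjacent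
exactly when `|i - j| ≤ 1`.

No vertex sees just one end of a longest induced path, since it would extend the path. If there is
no induced cycle with one more vertex either, no vertex sees exactly both ends; then, by
connectedness, every vertex is a clone of a path vertex and the clone classes are the cliques of a
fat path. If there is such a cycle, the dichotomy on its arcs makes every vertex a clone of a cycle
vertex, and the clone classes are the cliques of a fat cycle.
-/

section ClosedAdj

variable {V : Type*} {G : SimpleGraph V} {u v w x y z : V}

/-- `u` lies in the closed neighbourhood of `v`. Stating the forbidden-subgraph conditions through
this relation avoids case distinctions on coinciding vertices. -/
def ClosedAdj (G : SimpleGraph V) (u v : V) : Prop :=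
  u = v ∨ G.Adj u v

theorem ClosedAdj.refl (G : SimpleGraph V) (v : V) : ClosedAdj G v v :=
  Or.inl rfl

theorem closedAdj_comm : ClosedAdj G u v ↔ ClosedAdj G v u := by
  simp only [ClosedAdj, eq_comm, G.adj_comm]

theorem adj_iff_ne_and_closedAdj : G.Adj u v ↔ u ≠ v ∧ ClosedAdj G u v := by
  grind [ClosedAdj, G.ne_of_adj]

theorem ClosedAdj.adj_of_not_closedAdj (huv : ClosedAdj G u v) (huw : ClosedAdj G u w)
    (hvw : ¬ ClosedAdj G v w) : G.Adj u v :=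
  huv.resolve_left fun h => hvw (h ▸ huw)

theorem closedAdj_of_clawFree (hclaw : ¬ ContainsInduced G K13) (hx : ClosedAdj G v x)
    (hy : ClosedAdj G v y) (hz : ClosedAdj G v z) :
    ClosedAdj G x y ∨ ClosedAdj G x z ∨ ClosedAdj G y z := by
  by_contra! ⟨hxy, hxz, hyz⟩
  have hvx := hx.adj_of_not_closedAdj hy hxy
  have hvy := hy.adj_of_not_closedAdj hz hyz
  have hvz := hz.adj_of_not_closedAdj hx (mt closedAdj_comm.1 hxz)
  simp only [ClosedAdj, not_or] at hxy hxz hyz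
  refine hclaw ⟨⟨⟨![v, x, y, z], ?_⟩, @fun i j => ?_⟩⟩
  · intro i j
    have := hvx.ne
    have := hvy.ne
    have := hvz.ne
    fin_cases i <;> fin_cases j <;> simp <;> grind
  · change G.Adj (![v, x, y, z] i) (![v, x, y, z] j) ↔ _
    fin_cases i <;> fin_cases j <;>
      simp [K13, graphOfList, hvx, hvy, hvz, hxy, hxz, hyz, G.adj_comm _ v, G.adj_comm y x,
        G.adj_comm z x, G.adj_comm z y]

/-- The candidate `B₁,₁` is the triangle `x, y, z` with `u` pendant at `x` and `v` at `y`. -/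
theorem closedAdj_of_bullFree (hbull : ¬ ContainsInduced G (Bgraph 1)) (hxy : ClosedAdj G x y)
    (hxz : ClosedAdj G x z) (hyz : ClosedAdj G y z) (hxu : ClosedAdj G x u)
    (hyv : ClosedAdj G y v) :
    ClosedAdj G u y ∨ ClosedAdj G u z ∨ ClosedAdj G u v ∨ ClosedAdj G v x ∨ ClosedAdj G v z := by
  by_contra! ⟨huy, huz, huv, hvx, hvz⟩
  replace hxy := hxy.adj_of_not_closedAdj hxu (mt closedAdj_comm.1 huy)
  replace hyz := hyz.adj_of_not_closedAdj hyv (mt closedAdj_comm.1 hvz)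
  replace hxz := hxz.adj_of_not_closedAdj hxu (mt closedAdj_comm.1 huz)
  replace hxu := hxu.adj_of_not_closedAdj (.inr hxy) huy
  replace hyv := hyv.adj_of_not_closedAdj (.inr hxy.symm) hvx
  simp only [ClosedAdj, not_or] at huy huz huv hvx hvz
  refine hbull ⟨⟨⟨![x, y, z, u, v], ?_⟩, @fun i j => ?_⟩⟩
  · intro i j
    have := hxy.ne
    have := hxz.ne
    have := hyz.ne
    have := hxu.ne
    have := hyv.ne
    fin_cases i <;> fin_cases j <;> simp <;> grind
  · change G.Adj (![x, y, z, u, v] i) (![x, y, z, u, v] j) ↔ _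
    fin_cases i <;> fin_cases j <;>
      simp [Bgraph, hxy, hxz, hyz, hxu, hyv, huy, huz, huv, hvx, hvz, hxy.symm, hxz.symm,
        hyz.symm, hxu.symm, hyv.symm, G.adj_comm y u, G.adj_comm z u, G.adj_comm v u,
        G.adj_comm x v, G.adj_comm z v]

end ClosedAdj

section InducedPath

variable {V : Type*} {G : SimpleGraph V} {p : ℤ → V} {I J : Set ℤ} {a b i j k s : ℤ} {u v w : V}

/-- Along the part of `p` indexed by `I`, the vertex `v` sees (in the closed sense) exactly the
vertices whose index is at distance at most `1` from `i`. The index `i` need not lie in `I`: being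
a clone of `b + 1` on `Set.Icc a b` means seeing `p b` only. -/
def IsCloneOn (G : SimpleGraph V) (p : ℤ → V) (I : Set ℤ) (v : V) (i : ℤ) : Prop :=
  ∀ j ∈ I, ClosedAdj G v (p j) ↔ i ≤ j + 1 ∧ j ≤ i + 1

/-- The vertices `p i` with `i ∈ I` induce in `G` the graph in which consecutive integers are
adjacent. When `I` is an interval with at least three elements, this is an induced path. -/
def IsInducedPathOn (G : SimpleGraph V) (p : ℤ → V) (I : Set ℤ) : Prop :=
  ∀ i ∈ I, IsCloneOn G p I (p i) i

theorem IsCloneOn.mono (hv : IsCloneOn G p J v i) (hIJ : I ⊆ J) : IsCloneOn G p I v i :=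
  fun j hj => hv j (hIJ hj)

theorem IsInducedPathOn.mono (hp : IsInducedPathOn G p J) (hIJ : I ⊆ J) : IsInducedPathOn G p I :=
  fun i hi => (hp i (hIJ hi)).mono hIJ

theorem IsInducedPathOn.update (hp : IsInducedPathOn G p I) (hv : IsCloneOn G p I v i) :
    IsInducedPathOn G (Function.update p i v) (insert i I) := by
  intro j hj k hk
  have hrefl := ClosedAdj.refl G v
  have hcomm := closedAdj_comm (G := G) (u := p j) (v := v)
  have hpj := hp j
  grind [IsCloneOn, Function.update_apply]

theorem IsCloneOn.neg (hv : IsCloneOn G p (Set.Icc a b) v i) :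
    IsCloneOn G (fun k => p (-k)) (Set.Icc (-b) (-a)) v (-i) :=
  fun j hj => (hv (-j) (by grind)).trans (by omega)

theorem IsInducedPathOn.neg (hp : IsInducedPathOn G p (Set.Icc a b)) :
    IsInducedPathOn G (fun k => p (-k)) (Set.Icc (-b) (-a)) :=
  fun i hi => by simpa only [neg_neg] using (hp (-i) (by grind)).neg

theorem IsCloneOn.index_unique (hi : IsCloneOn G p (Set.Icc a b) v i)
    (hj : IsCloneOn G p (Set.Icc a b) v j) (hab : a + 2 ≤ b) (hia : i ∈ Set.Icc a b)
    (hja : j ∈ Set.Icc a b) : i = j := by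
  have hnear : ∀ k ∈ Set.Icc a b, i ≤ k + 1 ∧ k ≤ i + 1 ↔ j ≤ k + 1 ∧ k ≤ j + 1 :=
    fun k hk => (hi k hk).symm.trans (hj k hk)
  have := hnear (i - 1)
  have := hnear (i + 1)
  have := hnear (j - 1)
  have := hnear (j + 1)
  grind

theorem IsInducedPathOn.injOn_Icc (hp : IsInducedPathOn G p (Set.Icc a b)) (hab : a + 2 ≤ b) :
    Set.InjOn p (Set.Icc a b) :=
  fun i hi j hj hij => (hp i hi).index_unique (hij ▸ hp j hj) hab hi hj

variable (hclaw : ¬ ContainsInduced G K13) (hbull : ¬ ContainsInduced G (Bgraph 1))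

include hclaw in
theorem IsInducedPathOn.closedAdj_pred_or_succ (hp : IsInducedPathOn G p I) (hpred : i - 1 ∈ I)
    (hi : i ∈ I) (hsucc : i + 1 ∈ I) (h : ClosedAdj G v (p i)) :
    ClosedAdj G v (p (i - 1)) ∨ ClosedAdj G v (p (i + 1)) := by
  have hleft : ClosedAdj G (p i) (p (i - 1)) := (hp i hi _ hpred).2 (by omega)
  have hright : ClosedAdj G (p i) (p (i + 1)) := (hp i hi _ hsucc).2 (by omega)
  have hfar : ¬ ClosedAdj G (p (i - 1)) (p (i + 1)) := by rw [hp _ hpred _ hsucc]; omega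
  have := closedAdj_of_clawFree hclaw (closedAdj_comm.1 h) hleft hright
  tauto

include hclaw in
theorem IsInducedPathOn.not_closedAdj_of_closedAdj_of_closedAdj (hp : IsInducedPathOn G p I)
    (hi : i ∈ I) (hj : j ∈ I) (hk : k ∈ I) (hij : i + 2 ≤ j) (hjk : j + 2 ≤ k)
    (hvi : ClosedAdj G v (p i)) (hvj : ClosedAdj G v (p j)) : ¬ ClosedAdj G v (p k) := by
  intro hvk
  have := closedAdj_of_clawFree hclaw hvi hvj hvk
  rw [hp i hi j hj, hp i hi k hk, hp j hj k hk] at this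
  omega

include hbull in
theorem IsInducedPathOn.closedAdj_pred_or_succ_succ (hp : IsInducedPathOn G p I)
    (hpred : i - 1 ∈ I) (hi : i ∈ I) (hsucc : i + 1 ∈ I) (hsucc' : i + 2 ∈ I)
    (hvi : ClosedAdj G v (p i)) (hvsucc : ClosedAdj G v (p (i + 1))) :
    ClosedAdj G v (p (i - 1)) ∨ ClosedAdj G v (p (i + 2)) := by
  have hleft : ClosedAdj G (p i) (p (i - 1)) := (hp i hi _ hpred).2 (by omega)
  have hmid : ClosedAdj G (p i) (p (i + 1)) := (hp i hi _ hsucc).2 (by omega)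
  have hright : ClosedAdj G (p (i + 1)) (p (i + 2)) := (hp _ hsucc _ hsucc').2 (by omega)
  have := closedAdj_of_bullFree hbull hmid (closedAdj_comm.1 hvi) (closedAdj_comm.1 hvsucc)
    hleft hright
  rw [hp _ hpred _ hsucc, hp _ hpred _ hsucc', hp _ hsucc' _ hi,
    closedAdj_comm (u := p (i - 1)) (v := v), closedAdj_comm (u := p (i + 2)) (v := v)] at this
  grind

include hbull in
theorem IsInducedPathOn.closedAdj_add_two_mul (hp : IsInducedPathOn G p I) (hs : s = 1 ∨ s = -1)
    (hi : i ∈ I) (his : i + s ∈ I) (hiss : i + 2 * s ∈ I) (hk : k ∈ I)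
    (hfar : k + 2 ≤ min i (i + 2 * s) ∨ max i (i + 2 * s) + 2 ≤ k)
    (hvi : ClosedAdj G v (p i)) (hvis : ClosedAdj G v (p (i + s))) (hvk : ClosedAdj G v (p k)) :
    ClosedAdj G v (p (i + 2 * s)) := by
  have hback : ClosedAdj G (p (i + s)) (p i) := (hp _ his i hi).2 (by omega)
  have hnext : ClosedAdj G (p (i + s)) (p (i + 2 * s)) := (hp _ his _ hiss).2 (by omega)
  have := closedAdj_of_bullFree hbull hvis hvi hback hvk hnext
  rw [hp k hk _ his, hp k hk i hi, hp k hk _ hiss, hp _ hiss i hi,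
    closedAdj_comm (u := p (i + 2 * s)) (v := v)] at this
  grind

include hclaw hbull in
theorem IsInducedPathOn.not_closedAdj_add_three_mul (hp : IsInducedPathOn G p I)
    (hs : s = 1 ∨ s = -1) (hi : i ∈ I) (hi₁ : i + s ∈ I) (hi₂ : i + 2 * s ∈ I)
    (hi₃ : i + 3 * s ∈ I) (hi₄ : i + 4 * s ∈ I) (hv : ClosedAdj G v (p i))
    (hv₂ : ClosedAdj G v (p (i + 2 * s))) : ¬ ClosedAdj G v (p (i + 3 * s)) := by
  intro hv₃
  have hv₄ : ClosedAdj G v (p (i + 4 * s)) := by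
    have := hp.closedAdj_add_two_mul hbull (i := i + 2 * s) (k := i) (v := v) hs
    grind
  rcases hs with rfl | rfl
  · exact hp.not_closedAdj_of_closedAdj_of_closedAdj hclaw hi hi₂ hi₄ (by omega) (by omega)
      hv hv₂ hv₄
  · exact hp.not_closedAdj_of_closedAdj_of_closedAdj hclaw hi₄ hi₂ hi (by omega) (by omega)
      hv₄ hv₂ hv

include hclaw hbull in
theorem IsInducedPathOn.isCloneOn_of_closedAdj (hp : IsInducedPathOn G p (Set.Icc a b))
    (hab : a + 4 ≤ b) (hai : a < i) (hib : i < b) (hpred : ClosedAdj G v (p (i - 1)))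
    (hi : ClosedAdj G v (p i)) (hsucc : ClosedAdj G v (p (i + 1))) :
    IsCloneOn G p (Set.Icc a b) v i := by
  refine fun j hj => ⟨fun hvj => ?_, fun h => ?_⟩
  · by_contra hfar
    obtain h | rfl | rfl | h : j ≤ i - 3 ∨ j = i - 2 ∨ j = i + 2 ∨ i + 3 ≤ j := by omega
    · exact hp.not_closedAdj_of_closedAdj_of_closedAdj hclaw hj (j := i - 1) (k := i + 1)
        (by grind) (by grind) (by omega) (by omega) hvj hpred hsucc
    · have hleft := hp.not_closedAdj_add_three_mul hclaw hbull (i := i + 1) (v := v) (.inr rfl)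
      have hright := hp.not_closedAdj_add_three_mul hclaw hbull (i := i - 2) (v := v) (.inl rfl)
      grind
    · have hright := hp.not_closedAdj_add_three_mul hclaw hbull (i := i - 1) (v := v) (.inl rfl)
      have hleft := hp.not_closedAdj_add_three_mul hclaw hbull (i := i + 2) (v := v) (.inr rfl)
      grind
    · exact hp.not_closedAdj_of_closedAdj_of_closedAdj hclaw (i := i - 1) (j := i + 1)
        (by grind) (by grind) hj (by omega) (by omega) hpred hsucc hvj
  · obtain rfl | rfl | rfl : j = i - 1 ∨ j = i ∨ j = i + 1 := by omega
    all_goals assumption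

include hclaw hbull in
theorem IsInducedPathOn.isCloneOn_left (hp : IsInducedPathOn G p (Set.Icc a b)) (hab : a + 4 ≤ b)
    (ha : ClosedAdj G v (p a)) (ha₁ : ClosedAdj G v (p (a + 1)))
    (ha₂ : ¬ ClosedAdj G v (p (a + 2))) : IsCloneOn G p (Set.Icc a b) v a := by
  have hfar (k : ℤ) (hk : k ∈ Set.Icc (a + 4) b) : ¬ ClosedAdj G v (p k) := by
    have := hp.closedAdj_add_two_mul hbull (i := a) (k := k) (v := v) (.inl rfl)
    grind
  have ha₃ : ¬ ClosedAdj G v (p (a + 3)) := by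
    have := hp.closedAdj_pred_or_succ hclaw (i := a + 3) (v := v)
    grind
  intro j hj
  obtain rfl | rfl | rfl | rfl | h : j = a ∨ j = a + 1 ∨ j = a + 2 ∨ j = a + 3 ∨ a + 4 ≤ j := by
    grind
  all_goals grind

include hclaw hbull in
theorem IsInducedPathOn.isCloneOn_right (hp : IsInducedPathOn G p (Set.Icc a b)) (hab : a + 4 ≤ b)
    (hb : ClosedAdj G v (p b)) (hb₁ : ClosedAdj G v (p (b - 1)))
    (hb₂ : ¬ ClosedAdj G v (p (b - 2))) : IsCloneOn G p (Set.Icc a b) v b := by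
  have hclone := hp.neg.isCloneOn_left hclaw hbull (v := v) (by omega) (by simpa)
    (by simpa [neg_add_eq_sub]) (by simpa [neg_add_eq_sub])
  simpa only [neg_neg] using hclone.neg

include hclaw hbull in
theorem IsInducedPathOn.exists_isCloneOn_of_succ (hp : IsInducedPathOn G p (Set.Icc a b))
    (hab : a + 4 ≤ b) (hai : a ≤ i) (hib : i < b) (hi : ClosedAdj G v (p i))
    (hsucc : ClosedAdj G v (p (i + 1))) : ∃ i, IsCloneOn G p (Set.Icc a b) v i := by
  by_cases hpred : a < i ∧ ClosedAdj G v (p (i - 1))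
  · exact ⟨i, hp.isCloneOn_of_closedAdj hclaw hbull hab hpred.1 hib hpred.2 hi hsucc⟩
  by_cases hsucc₂ : i + 1 < b ∧ ClosedAdj G v (p (i + 2))
  · exact ⟨i + 1, hp.isCloneOn_of_closedAdj hclaw hbull hab (by omega) hsucc₂.1 (by simpa)
      hsucc (by simpa [add_assoc] using hsucc₂.2)⟩
  obtain rfl | rfl : i = a ∨ i = b - 1 := by
    have := hp.closedAdj_pred_or_succ_succ hbull (i := i) (v := v)
    grind
  · exact ⟨i, hp.isCloneOn_left hclaw hbull hab hi hsucc fun h => hsucc₂ ⟨by omega, h⟩⟩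
  · rw [sub_add_cancel] at hsucc
    exact ⟨b, hp.isCloneOn_right hclaw hbull hab hsucc hi fun h =>
      hpred ⟨by omega, by rwa [sub_sub]⟩⟩

include hclaw hbull in
theorem IsInducedPathOn.exists_isCloneOn_or (hp : IsInducedPathOn G p (Set.Icc a b))
    (hab : a + 4 ≤ b) (v : V) :
    (∃ i, IsCloneOn G p (Set.Icc a b) v i) ∨
      ∀ j ∈ Set.Icc a b, ClosedAdj G v (p j) ↔ j = a ∨ j = b := by
  by_cases hinner : ∃ i ∈ Set.Ioo a b, ClosedAdj G v (p i)
  · obtain ⟨i, hi, hvi⟩ := hinner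
    left
    obtain h | h := hp.closedAdj_pred_or_succ hclaw (by grind) (by grind) (by grind) hvi
    · exact hp.exists_isCloneOn_of_succ hclaw hbull hab (i := i - 1) (by grind) (by grind) h
        (by simpa)
    · exact hp.exists_isCloneOn_of_succ hclaw hbull hab (by grind) (by grind) hvi h
  · have hends (j : ℤ) (hj : j ∈ Set.Icc a b) (hvj : ClosedAdj G v (p j)) : j = a ∨ j = b := by
      grind
    by_cases ha : ClosedAdj G v (p a) <;> by_cases hb : ClosedAdj G v (p b)
    · exact .inr fun j hj => ⟨hends j hj, by rintro (rfl | rfl) <;> assumption⟩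
    · exact .inl ⟨a - 1, fun j hj => by grind⟩
    · exact .inl ⟨b + 1, fun j hj => by grind⟩
    · exact .inl ⟨b + 2, fun j hj => by grind⟩

include hclaw hbull in
theorem IsInducedPathOn.closedAdj_iff_of_add_le_add (hp : IsInducedPathOn G p (Set.Icc a b))
    (hab : a + 4 ≤ b) (hi : i ∈ Set.Icc a b) (hj : j ∈ Set.Icc a b) (hij : i ≤ j)
    (hsum : a + b ≤ i + j) (hu : IsCloneOn G p (Set.Icc a b) u i)
    (hv : IsCloneOn G p (Set.Icc a b) v j) : ClosedAdj G u v ↔ j ≤ i + 1 := by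
  have hpv := hp.update hv
  rw [Set.insert_eq_of_mem hj] at hpv
  have hu' (k : ℤ) (hk : k ∈ Set.Icc a b) (hkj : k ≠ j) :
      ClosedAdj G u (Function.update p j v k) ↔ i ≤ k + 1 ∧ k ≤ i + 1 := by
    rw [Function.update_of_ne hkj, hu k hk]
  rw [← Function.update_self j v p]
  obtain ⟨i', hi'⟩ | hends := hpv.exists_isCloneOn_or hclaw hbull hab u
  · have hnear (k : ℤ) (hk : k ∈ Set.Icc a b) (hkj : k ≠ j) :
        i' ≤ k + 1 ∧ k ≤ i' + 1 ↔ i ≤ k + 1 ∧ k ≤ i + 1 := by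
      rw [← hi' k hk, hu' k hk hkj]
    rw [hi' j hj]
    simp only [Set.mem_Icc] at hi hj hnear
    have := hnear (i - 2)
    have := hnear (i - 1)
    have := hnear i
    have := hnear (i + 1)
    have := hnear (i + 2)
    omega
  · have hnear (k : ℤ) (hk : k ∈ Set.Icc a b) (hkj : k ≠ j) :
        k = a ∨ k = b ↔ i ≤ k + 1 ∧ k ≤ i + 1 := by
      rw [← hends k hk, hu' k hk hkj]
    simp only [Set.mem_Icc] at hi hj hnear
    have := hnear (i - 1)
    have := hnear i
    have := hnear (i + 1)
    omega

include hclaw hbull in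
theorem IsInducedPathOn.closedAdj_iff (hp : IsInducedPathOn G p (Set.Icc a b)) (hab : a + 4 ≤ b)
    (hi : i ∈ Set.Icc a b) (hj : j ∈ Set.Icc a b) (hu : IsCloneOn G p (Set.Icc a b) u i)
    (hv : IsCloneOn G p (Set.Icc a b) v j) : ClosedAdj G u v ↔ i ≤ j + 1 ∧ j ≤ i + 1 := by
  wlog hij : i ≤ j generalizing i j u v
  · rw [closedAdj_comm, this hj hi hv hu (by omega), and_comm]
  by_cases hsum : a + b ≤ i + j
  · rw [hp.closedAdj_iff_of_add_le_add hclaw hbull hab hi hj hij hsum hu hv]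
    omega
  · rw [closedAdj_comm, hp.neg.closedAdj_iff_of_add_le_add hclaw hbull (by omega) (by grind)
      (by grind) (neg_le_neg hij) (by omega) hv.neg hu.neg]
    omega

end InducedPath

section PathGraph

variable {V : Type*} {G : SimpleGraph V} {p : ℤ → V} {a b : ℤ} {m n : ℕ}

theorem ContainsInduced.pathGraph_mono (h : ContainsInduced G (pathGraph n)) (hmn : m ≤ n) :
    ContainsInduced G (pathGraph m) := by
  obtain ⟨f⟩ := h
  exact ⟨⟨⟨fun i => f (i.castLE hmn), f.injective.comp (Fin.castLE_injective hmn)⟩, by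
    simp [pathGraph_adj]⟩⟩

theorem not_containsInduced_pathGraph_card_succ [Fintype V] (G : SimpleGraph V) :
    ¬ ContainsInduced G (pathGraph (Fintype.card V + 1)) := by
  rintro ⟨f⟩
  have := Fintype.card_le_of_injective f f.injective
  rw [Fintype.card_fin] at this
  omega

theorem IsInducedPathOn.containsInduced_pathGraph (hp : IsInducedPathOn G p (Set.Icc a b))
    (hab : a + 2 ≤ b) (hn : a + n ≤ b + 1) : ContainsInduced G (pathGraph n) := by
  have hmem (i : Fin n) : a + i ∈ Set.Icc a b := by grind
  have hinj (i j : Fin n) : p (a + i) = p (a + j) ↔ i = j := by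
    rw [(hp.injOn_Icc hab).eq_iff (hmem i) (hmem j)]
    omega
  refine ⟨⟨⟨fun i => p (a + i), fun i j hij => (hinj i j).1 hij⟩, @fun i j => ?_⟩⟩
  change G.Adj (p (a + i)) (p (a + j)) ↔ _
  rw [adj_iff_ne_and_closedAdj, hp _ (hmem i) _ (hmem j), pathGraph_adj, ne_eq, hinj]
  omega

theorem exists_isInducedPathOn_of_containsInduced (hn : n ≠ 0)
    (h : ContainsInduced G (pathGraph n)) :
    ∃ p : ℤ → V, IsInducedPathOn G p (Set.Icc 0 (n - 1)) := by
  obtain ⟨f⟩ := h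
  have : NeZero n := ⟨hn⟩
  refine ⟨fun k => f (Fin.ofNat n k.toNat), fun i hi j hj => ?_⟩
  have hval (k : ℤ) (hk : k ∈ Set.Icc 0 (n - 1 : ℤ)) : ((Fin.ofNat n k.toNat : ℕ) : ℤ) = k := by
    rw [Fin.val_ofNat, Nat.mod_eq_of_lt (by grind)]
    grind
  have hi' := hval i hi
  have hj' := hval j hj
  rw [ClosedAdj, f.map_adj_iff, f.injective.eq_iff, Fin.ext_iff, pathGraph_adj]
  omega

theorem exists_containsInduced_and_not_containsInduced_succ (h : ContainsInduced G (pathGraph m))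
    (hn : ¬ ContainsInduced G (pathGraph n)) :
    ∃ k, m ≤ k ∧ ContainsInduced G (pathGraph k) ∧ ¬ ContainsInduced G (pathGraph (k + 1)) := by
  by_contra! hstep
  have hall (k : ℕ) (hk : m ≤ k) : ContainsInduced G (pathGraph k) :=
    Nat.le_induction h hstep k hk
  exact hn ((hall _ (le_max_left m n)).pathGraph_mono (le_max_right m n))

theorem forall_of_connected {P : V → Prop} {v₀ : V} (hconn : G.Connected) (h₀ : P v₀)
    (hadj : ∀ u w, P u → G.Adj u w → P w) (v : V) : P v := by
  obtain ⟨walk⟩ := hconn.preconnected v₀ v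
  induction walk with
  | nil => exact h₀
  | cons h _ ih => exact ih (hadj _ _ h₀ h)

end PathGraph

section InducedCycle

variable {V : Type*} {G : SimpleGraph V} {c : ℤ → V} {i j k m : ℤ} {u v : V}

/-- The `m`-periodic sequence `c` runs around an induced cycle of length `m`: any `m - 1`
consecutive terms form an induced path. For `m ≥ 4` this is the usual notion. -/
structure IsInducedCycle (G : SimpleGraph V) (c : ℤ → V) (m : ℤ) : Prop where
  periodic : Function.Periodic c m
  isInducedPathOn : ∀ k, IsInducedPathOn G c (Set.Icc k (k + m - 2))

/-- The vertex `v` sees exactly `c (i - 1)`, `c i`, `c (i + 1)` on the `m`-cycle `c`. The window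
is the largest one around `i` on which no other index is congruent to `i - 1`, `i` or `i + 1`. -/
def IsCycleClone (G : SimpleGraph V) (c : ℤ → V) (m : ℤ) (v : V) (i : ℤ) : Prop :=
  IsCloneOn G c (Set.Icc (i - m + 2) (i + m - 2)) v i

theorem IsCycleClone.add_mul (hc : IsInducedCycle G c m) (hv : IsCycleClone G c m v i) (t : ℤ) :
    IsCycleClone G c m v (i + t * m) := by
  intro j hj
  rw [← hc.periodic.sub_int_mul_eq t, Int.cast_id, hv _ (by grind)]
  grind

theorem IsCycleClone.index_unique (hi : IsCycleClone G c m v i) (hj : IsCycleClone G c m v j)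
    (hm : 6 ≤ m) (hij : i ≤ j) (hjm : j < i + m) : i = j := by
  have := hi (i - 1)
  have := hj (i - 1)
  have := hi (i + 1)
  have := hj (i + 1)
  grind

theorem IsInducedCycle.isCycleClone (hc : IsInducedCycle G c m) (hm : 6 ≤ m) (i : ℤ) :
    IsCycleClone G c m (c i) i := by
  intro j hj
  obtain h | h := le_total i j
  · exact hc.isInducedPathOn i i (by grind) j (by grind)
  · exact hc.isInducedPathOn j i (by grind) j (by grind)

variable (hclaw : ¬ ContainsInduced G K13) (hbull : ¬ ContainsInduced G (Bgraph 1))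

include hclaw hbull in
theorem IsInducedCycle.isCycleClone_of_closedAdj (hc : IsInducedCycle G c m) (hm : 6 ≤ m)
    (hpred : ClosedAdj G v (c (i - 1))) (hi : ClosedAdj G v (c i))
    (hsucc : ClosedAdj G v (c (i + 1))) : IsCycleClone G c m v i := by
  have hwindow (k : ℤ) (hki : k < i) (hik : i < k + m - 2) :
      IsCloneOn G c (Set.Icc k (k + m - 2)) v i :=
    (hc.isInducedPathOn k).isCloneOn_of_closedAdj hclaw hbull (by omega) hki hik hpred hi hsucc
  have hwindow₂ := hwindow (i - 2) (by omega) (by omega)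
  have hwindow₃ := hwindow (i - 3) (by omega) (by omega)
  intro j hj
  obtain h | h | h | h :
      j ≤ i - 4 ∨ j = i - 3 ∨ i - 2 ≤ j ∧ j ≤ i + m - 4 ∨ i + m - 3 ≤ j := by omega
  · rw [← hc.periodic, hwindow₂ _ (by grind)]
    grind
  · exact hwindow₃ j (by grind)
  · exact hwindow₂ j (by grind)
  · rw [← hc.periodic.sub_eq, hwindow₃ _ (by grind)]
    grind

include hclaw hbull in
theorem IsInducedCycle.exists_isCycleClone (hc : IsInducedCycle G c m) (hm : 6 ≤ m)
    (hv : ClosedAdj G v (c k)) : ∃ i, IsCycleClone G c m v i := by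
  obtain ⟨i, hi⟩ | hends := (hc.isInducedPathOn (k - 2)).exists_isCloneOn_or hclaw hbull
    (by omega) v
  · have hik := (hi k (by grind)).1 hv
    exact ⟨i, hc.isCycleClone_of_closedAdj hclaw hbull hm ((hi _ (by grind)).2 (by omega))
      ((hi _ (by grind)).2 (by omega)) ((hi _ (by grind)).2 (by omega))⟩
  · have := (hends k (by grind)).1 hv
    omega

include hclaw hbull in
theorem IsInducedCycle.forall_exists_isCycleClone (hc : IsInducedCycle G c m) (hm : 6 ≤ m)
    (hconn : G.Connected) (v : V) : ∃ i, IsCycleClone G c m v i := by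
  refine forall_of_connected (P := fun v => ∃ i, IsCycleClone G c m v i) (v₀ := c 0) hconn
    ?_ ?_ v
  · exact ⟨0, hc.isCycleClone hm 0⟩
  rintro u w ⟨i, hu⟩ huw
  have hpred : ClosedAdj G u (c (i - 1)) := (hu _ (by grind)).2 (by omega)
  have hsucc : ClosedAdj G u (c (i + 1)) := (hu _ (by grind)).2 (by omega)
  have hfar : ¬ ClosedAdj G (c (i - 1)) (c (i + 1)) := by
    rw [hc.isInducedPathOn (i - 1) (i - 1) (by grind) (i + 1) (by grind)]
    omega
  obtain h | h | h := closedAdj_of_clawFree hclaw (.inr huw) hpred hsucc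
  · exact hc.exists_isCycleClone hclaw hbull hm h
  · exact hc.exists_isCycleClone hclaw hbull hm h
  · exact absurd h hfar

include hclaw hbull in
theorem IsInducedCycle.closedAdj_iff (hc : IsInducedCycle G c m) (hm : 6 ≤ m)
    (hu : IsCycleClone G c m u i) (hv : IsCycleClone G c m v j) (hij : i ≤ j) (hjm : j < i + m) :
    ClosedAdj G u v ↔ j ≤ i + 1 ∨ j = i + m - 1 := by
  obtain rfl | hjm := eq_or_ne j (i + m - 1)
  · have hv' : IsCycleClone G c m v (i - 1) := by
      convert hv.add_mul hc (-1) using 1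
      ring
    rw [(hc.isInducedPathOn (i - 1)).closedAdj_iff hclaw hbull (by omega) (i := i) (by grind)
      (by grind) (hu.mono (by grind)) (hv'.mono (by grind))]
    omega
  · rw [(hc.isInducedPathOn i).closedAdj_iff hclaw hbull (by omega) (i := i) (j := j) (by grind)
      (by grind) (hu.mono (by grind)) (hv.mono (by grind))]
    omega

theorem emod_sub_emod_eq (hm : 0 < m) (hij : i < j + m) (hji : j < i + m) :
    i % m - j % m = i - j ∨ i % m - j % m = i - j + m ∨ i % m - j % m = i - j - m := by
  have hi := Int.mul_ediv_add_emod i m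
  have hj := Int.mul_ediv_add_emod j m
  have := Int.emod_nonneg i hm.ne'
  have := Int.emod_nonneg j hm.ne'
  have := Int.emod_lt_of_pos i hm
  have := Int.emod_lt_of_pos j hm
  obtain ⟨t, ht⟩ : ∃ t, i / m = j / m + t := ⟨i / m - j / m, by ring⟩
  have hlt : t < 2 := by nlinarith
  have hgt : -2 < t := by nlinarith
  rw [ht] at hi
  obtain rfl | rfl | rfl : t = -1 ∨ t = 0 ∨ t = 1 := by omega
  all_goals grind

theorem IsInducedPathOn.isInducedCycle (hp : IsInducedPathOn G c (Set.Icc 0 (m - 2)))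
    (hm : 4 ≤ m) (hv : ∀ j ∈ Set.Icc 0 (m - 2), ClosedAdj G v (c j) ↔ j = 0 ∨ j = m - 2) :
    IsInducedCycle G (fun k => Function.update c (m - 1) v (k % m)) m := by
  set c' := Function.update c (m - 1) v
  have hadj (i j : ℤ) (hi : i ∈ Set.Icc 0 (m - 1)) (hj : j ∈ Set.Icc 0 (m - 1)) :
      ClosedAdj G (c' i) (c' j) ↔
        i ≤ j + 1 ∧ j ≤ i + 1 ∨ i = 0 ∧ j = m - 1 ∨ i = m - 1 ∧ j = 0 := by
    have hvv := ClosedAdj.refl G v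
    have hcomm := closedAdj_comm (G := G) (u := c i) (v := v)
    have := hp i
    grind [IsCloneOn, Function.update_apply]
  refine ⟨fun k => by simp only [Int.add_emod_right], fun k i hi j hj => ?_⟩
  have := emod_sub_emod_eq (i := i) (j := j) (m := m) (by omega) (by grind) (by grind)
  have := Int.emod_nonneg i (b := m) (by omega)
  have := Int.emod_nonneg j (b := m) (by omega)
  have := Int.emod_lt_of_pos i (b := m) (by omega)
  have := Int.emod_lt_of_pos j (b := m) (by omega)
  rw [hadj _ _ (by grind) (by grind)]
  grind

end InducedCycle

section Decomposition

variable {V : Type*} {G : SimpleGraph V} {p c : ℤ → V} {a b k : ℤ} {l m n : ℕ} {u v : V}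
  (hclaw : ¬ ContainsInduced G K13) (hbull : ¬ ContainsInduced G (Bgraph 1))

include hclaw hbull in
theorem IsInducedPathOn.exists_isCloneOn_mem (hp : IsInducedPathOn G p (Set.Icc 0 (n - 1)))
    (hn : 5 ≤ n) (hmax : ¬ ContainsInduced G (pathGraph (n + 1)))
    (hcycle : ∀ c, ¬ IsInducedCycle G c (n + 1)) (hk : k ∈ Set.Icc 0 (n - 1 : ℤ))
    (hv : ClosedAdj G v (p k)) :
    ∃ i ∈ Set.Icc 0 (n - 1 : ℤ), IsCloneOn G p (Set.Icc 0 (n - 1)) v i := by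
  obtain ⟨i, hi⟩ | hends := hp.exists_isCloneOn_or hclaw hbull (by omega) v
  · refine ⟨i, ?_, hi⟩
    have hik := (hi k hk).1 hv
    have hextend := hp.update hi
    by_contra hout
    obtain rfl | rfl : i = -1 ∨ i = n := by grind
    · exact hmax ((hextend.mono (I := Set.Icc (-1) (n - 1)) (by grind)).containsInduced_pathGraph
        (by omega) (by grind))
    · exact hmax ((hextend.mono (I := Set.Icc 0 n) (by grind)).containsInduced_pathGraph
        (by omega) (by grind))
  · rw [show (n : ℤ) - 1 = n + 1 - 2 by ring] at hp hends
    exact absurd (hp.isInducedCycle (by omega) hends) (hcycle _)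

include hclaw hbull in
theorem IsInducedPathOn.forall_exists_isCloneOn_mem
    (hp : IsInducedPathOn G p (Set.Icc 0 (n - 1))) (hn : 5 ≤ n)
    (hmax : ¬ ContainsInduced G (pathGraph (n + 1)))
    (hcycle : ∀ c, ¬ IsInducedCycle G c (n + 1)) (hconn : G.Connected) (v : V) :
    ∃ i ∈ Set.Icc 0 (n - 1 : ℤ), IsCloneOn G p (Set.Icc 0 (n - 1)) v i := by
  refine forall_of_connected
    (P := fun v => ∃ i ∈ Set.Icc 0 (n - 1 : ℤ), IsCloneOn G p (Set.Icc 0 (n - 1)) v i)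
    (v₀ := p 0) hconn ?_ ?_ v
  · exact ⟨0, by grind, hp 0 (by grind)⟩
  rintro u w ⟨i, hi, hu⟩ huw
  have hpu := hp.update hu
  rw [Set.insert_eq_of_mem hi] at hpu
  have hwu : ClosedAdj G w (Function.update p i u i) := by
    rw [Function.update_self]
    exact .inr huw.symm
  obtain ⟨i', hi', hw⟩ := hpu.exists_isCloneOn_mem hclaw hbull hn hmax hcycle hi hwu
  obtain ⟨k, hk, hki, hwk⟩ : ∃ k ∈ Set.Icc 0 (n - 1 : ℤ), k ≠ i ∧ i' ≤ k + 1 ∧ k ≤ i' + 1 := by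
    obtain h | h | h : i' ≠ i ∨ i' = i ∧ i + 1 ≤ n - 1 ∨ i' = i ∧ 0 ≤ i - 1 := by omega
    · exact ⟨i', hi', h, by omega, by omega⟩
    · exact ⟨i + 1, by grind⟩
    · exact ⟨i - 1, by grind⟩
  rw [← hw k hk, Function.update_of_ne hki] at hwk
  exact hp.exists_isCloneOn_mem hclaw hbull hn hmax hcycle hk hwk

include hclaw hbull in
theorem IsInducedPathOn.isFatPath_of_forall_exists_isCloneOn
    (hp : IsInducedPathOn G p (Set.Icc 0 (n - 1))) (hn : 5 ≤ n)
    (hcover : ∀ v, ∃ i ∈ Set.Icc 0 (n - 1 : ℤ), IsCloneOn G p (Set.Icc 0 (n - 1)) v i) :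
    IsFatPath G n := by
  refine ⟨hn, fun i => {v | IsCloneOn G p (Set.Icc 0 (n - 1)) v i}, ⟨fun i => ?_, ?_, ?_⟩, ?_⟩
  · exact ⟨p i, hp i (by grind)⟩
  · refine fun i j hij => Set.disjoint_left.2 fun v hi hj => hij ?_
    have := hi.index_unique hj (by omega) (by grind) (by grind)
    omega
  · intro i j u v hu hv huv
    rw [adj_iff_ne_and_closedAdj, hp.closedAdj_iff hclaw hbull (by omega) (by grind) (by grind)
      hu hv]
    grind
  · intro v
    obtain ⟨i, hi, hv⟩ := hcover v
    lift i to ℕ using hi.1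
    exact ⟨⟨i, by grind⟩, hv⟩

theorem add_one_mod_eq_iff (i j : Fin (l + 1)) :
    (i + 1 : ℕ) % (l + 1) = j ↔ (i : ℕ) + 1 = j ∨ (i : ℕ) = l ∧ (j : ℕ) = 0 := by
  obtain h | h : (i : ℕ) = l ∨ (i : ℕ) < l := by omega
  · rw [h, Nat.mod_self]
    omega
  · rw [Nat.mod_eq_of_lt (by omega)]
    omega

include hclaw hbull in
theorem IsInducedCycle.isFatCycle (hc : IsInducedCycle G c (l + 1)) (hl : 5 ≤ l)
    (hconn : G.Connected) : IsFatCycle G l := by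
  refine ⟨hl, fun i => {v | IsCycleClone G c (l + 1) v i}, ⟨fun i => ?_, ?_, ?_⟩, ?_⟩
  · exact ⟨c i, hc.isCycleClone (by omega) i⟩
  · refine fun i j hij => Set.disjoint_left.2 fun v hi hj => hij ?_
    wlog hle : i ≤ j generalizing i j
    · exact (this j i hij.symm hj hi (by omega)).symm
    have := IsCycleClone.index_unique hi hj (by omega) (by omega) (by omega)
    omega
  · intro i j u v hu hv huv
    wlog hle : i ≤ j generalizing i j u v
    · rw [G.adj_comm, this j i v u hv hu huv.symm (by omega)]
      grind
    rw [adj_iff_ne_and_closedAdj, and_iff_right huv,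
      hc.closedAdj_iff hclaw hbull (by omega) hu hv (by omega) (by omega),
      add_one_mod_eq_iff, add_one_mod_eq_iff]
    omega
  · intro v
    obtain ⟨i, hi⟩ := hc.forall_exists_isCycleClone hclaw hbull (by omega) hconn v
    have hmod : IsCycleClone G c (l + 1) v (i % (l + 1)) := by
      convert hi.add_mul hc (-(i / (l + 1))) using 1
      rw [Int.emod_def]
      ring
    have hnonneg := Int.emod_nonneg i (b := (l + 1 : ℤ)) (by omega)
    have hlt := Int.emod_lt_of_pos i (b := (l + 1 : ℤ)) (by omega)
    lift i % (l + 1) to ℕ using hnonneg with r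
    exact ⟨⟨r, by omega⟩, hmod⟩

theorem IsFatPathDecomp.containsInduced_pathGraph {L : Fin l → Set V} (hL : IsFatPathDecomp G l L) :
    ContainsInduced G (pathGraph l) := by
  obtain ⟨hne, hdisj, hadj⟩ := hL
  choose x hx using hne
  have hinj : Function.Injective x := by
    intro i j hij
    by_contra hne
    exact Set.disjoint_left.1 (hdisj i j hne) (hx i) (hij ▸ hx j)
  refine ⟨⟨⟨x, hinj⟩, @fun i j => ?_⟩⟩
  change G.Adj (x i) (x j) ↔ _
  rw [pathGraph_adj]
  obtain rfl | hij := eq_or_ne i j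
  · simp
  · rw [hadj i j _ _ (hx i) (hx j) (hinj.ne hij), or_iff_right hij]

theorem IsFatCycleDecomp.isFatPathDecomp {L : Fin (l + 1) → Set V} (hL : IsFatCycleDecomp G l L) :
    IsFatPathDecomp G l (L ∘ Fin.castSucc) := by
  obtain ⟨hne, hdisj, hadj⟩ := hL
  refine ⟨fun i => hne _, fun i j hij => hdisj _ _ (by simpa), fun i j u v hu hv huv => ?_⟩
  rw [hadj _ _ u v hu hv huv, add_one_mod_eq_iff, add_one_mod_eq_iff, Fin.castSucc_inj,
    Fin.val_castSucc, Fin.val_castSucc]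
  omega

theorem MemFatFamily.containsInduced_pathGraph (h : MemFatFamily G n) :
    ContainsInduced G (pathGraph n) := by
  obtain ⟨l, hnl, ⟨-, L, hL, -⟩ | ⟨-, L, hL, -⟩⟩ := h
  · exact hL.containsInduced_pathGraph.pathGraph_mono hnl
  · exact hL.isFatPathDecomp.containsInduced_pathGraph.pathGraph_mono hnl

include hclaw hbull in
theorem memFatFamily_of_containsInduced_pathGraph (hconn : G.Connected) (hn : 5 ≤ n)
    (hpath : ContainsInduced G (pathGraph n)) (hbdd : ∃ m, ¬ ContainsInduced G (pathGraph m)) :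
    MemFatFamily G n := by
  obtain ⟨m, hm⟩ := hbdd
  obtain ⟨l, hnl, hl, hmax⟩ := exists_containsInduced_and_not_containsInduced_succ hpath hm
  refine ⟨l, hnl, ?_⟩
  by_cases hcycle : ∃ c, IsInducedCycle G c (l + 1)
  · obtain ⟨c, hc⟩ := hcycle
    exact .inr (hc.isFatCycle hclaw hbull (by omega) hconn)
  · obtain ⟨p, hp⟩ := exists_isInducedPathOn_of_containsInduced (by omega) hl
    have hcover := hp.forall_exists_isCloneOn_mem hclaw hbull (by omega) hmax
      (not_exists.1 hcycle) hconn
    exact .inl (hp.isFatPath_of_forall_exists_isCloneOn hclaw hbull (by omega) hcover)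

end Decomposition

theorem stmt1_general {V : Type*} {n : ℕ} (hn : 5 ≤ n) (G : SimpleGraph V) (hconn : G.Connected)
    (hK13 : ¬ ContainsInduced G K13) (hB11 : ¬ ContainsInduced G (Bgraph 1))
    (hbdd : ∃ m, ¬ ContainsInduced G (pathGraph m)) :
    ContainsInduced G (pathGraph n) ↔ MemFatFamily G n :=
  ⟨fun h => memFatFamily_of_containsInduced_pathGraph hK13 hB11 hconn hn h hbdd,
    fun h => h.containsInduced_pathGraph⟩

/-- **Theorem 2 (Statement 1).** Let `G` be a connected `{K_{1,3}, B_{1,1}}`-free graph.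
Then `G` contains `P₅` as an induced subgraph iff `G` belongs to `𝒫(5)`. -/
theorem stmt1 {V : Type*} [Fintype V] (G : SimpleGraph V) (hconn : G.Connected)
    (hK13 : ¬ ContainsInduced G K13) (hB11 : ¬ ContainsInduced G (Bgraph 1)) :
    ContainsInduced G (SimpleGraph.pathGraph 5) ↔ MemFatFamily G 5 :=
  stmt1_general le_rfl G hconn hK13 hB11 ⟨_, not_containsInduced_pathGraph_card_succ G⟩
end

section
/- Let G be a connected {K_{1,3}, Z_2}-free graph which contains N as an induced subgraph. Then G is a pointed generalized comb. -/
/-!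
Let `c₀, c₁, c₂` be the triangle of an induced net and `lᵢ` the pendant vertex at `cᵢ`. The central
clique of the comb is the set `C` of the vertices equal or adjacent to each `cᵢ`: a vertex adjacent
to some `cᵢ` is either `lᵢ` or, by claw- and `Z₂`-freeness, belongs to `C`. A vertex of `C` sees at
most one `lᵢ`, so any two vertices of `C` miss a common `lᵢ`, and the claw centered at `cᵢ` makes
them adjacent. If a vertex `w` outside `C` has a neighbor in `C`, then an edge from `w` to another
vertex outside `C` yields an induced `Z₂`; by connectedness every vertex outside `C` then has a
neighbor in `C`, and no two of them are adjacent. Finally, two of them with a common neighbor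
`x ∈ C` would span a claw centered at `x` with some `cᵢ`.
-/

open SimpleGraph

/-- `Z_k = N_{k,0,0}`: a triangle `0,1,2` together with a path of length `k`
attached at the vertex `2`. -/
def Zgraph (k : ℕ) : SimpleGraph (Fin (k + 3)) :=
  SimpleGraph.fromRel (fun a b =>
    (a.val = 0 ∧ b.val = 1) ∨ (a.val = 0 ∧ b.val = 2) ∨ (a.val = 1 ∧ b.val = 2) ∨
    (2 ≤ a.val ∧ b.val = a.val + 1))

/-- The net `N = N_{1,1,1}`: a triangle `0,1,2` with pendant vertices `3,4,5`
attached to `0,1,2` respectively. -/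
def Ngraph : SimpleGraph (Fin 6) :=
  graphOfList 6 [(0,1), (0,2), (1,2), (0,3), (1,4), (2,5)]

/-- `G` is a pointed generalized comb: there are `m ≥ 3` leaf vertices `A 0,…,A (m-1)`,
a clique `C` with `|C| ≥ m` covering the rest of the graph, and pairwise disjoint nonempty
subcliques `R i ⊆ C` such that each `A i` is joined exactly to the vertices of `R i`. -/
def IsPointedGeneralizedComb {V : Type*} (G : SimpleGraph V) : Prop :=
  ∃ (m : ℕ) (A : Fin m → V) (C : Set V) (R : Fin m → Set V),
    3 ≤ m ∧
    Function.Injective A ∧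
    (∀ i, A i ∉ C) ∧
    (∀ v : V, (∃ i, v = A i) ∨ v ∈ C) ∧
    m ≤ C.ncard ∧
    (∀ i, (R i).Nonempty) ∧
    (∀ i, R i ⊆ C) ∧
    (∀ i j, i ≠ j → Disjoint (R i) (R j)) ∧
    (∀ u v : V, u ≠ v →
      (G.Adj u v ↔ (u ∈ C ∧ v ∈ C) ∨ ∃ i, (u = A i ∧ v ∈ R i) ∨ (v = A i ∧ u ∈ R i)))

section Pigeonhole

theorem exists_notMem_notMem_of_subsingleton {α : Type*} (hα : 2 < ENat.card α) {s t : Set α}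
    (hs : s.Subsingleton) (ht : t.Subsingleton) : ∃ i, i ∉ s ∧ i ∉ t := by
  by_contra! h
  have hcover : Set.univ ⊆ s ∪ t := fun i _ ↦ or_iff_not_imp_left.2 (h i)
  refine hα.not_ge ?_
  calc
    ENat.card α = (Set.univ : Set α).encard := (Set.encard_univ α).symm
    _ ≤ (s ∪ t).encard := Set.encard_le_encard hcover
    _ ≤ s.encard + t.encard := Set.encard_union_le s t
    _ ≤ 1 + 1 := add_le_add (Set.encard_le_one_iff_subsingleton.2 hs)
      (Set.encard_le_one_iff_subsingleton.2 ht)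
    _ = 2 := one_add_one_eq_two

theorem exists_fin_three_ne_ne (i j : Fin 3) : ∃ k, k ≠ i ∧ k ≠ j :=
  Cardinal.exists_ne_ne_of_three_le (Cardinal.mk_fin 3).ge i j

end Pigeonhole

section InducedSubgraphs

variable {V W : Type*} {G : SimpleGraph V} {H : SimpleGraph W}

theorem containsInduced_of_forall_lt [LinearOrder W] (f : W → V)
    (hne : ∀ i j, i < j → f i ≠ f j) (hadj : ∀ i j, i < j → (G.Adj (f i) (f j) ↔ H.Adj i j)) :
    ContainsInduced G H := by
  have hinj : Function.Injective f := fun i j hij ↦ by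
    by_contra hne_ij
    rcases lt_or_gt_of_ne hne_ij with hlt | hgt
    · exact hne i j hlt hij
    · exact hne j i hgt hij.symm
  refine ⟨⟨f, hinj⟩, fun {i j} ↦ ?_⟩
  rcases lt_trichotomy i j with hij | rfl | hji
  · exact hadj i j hij
  · simp only [SimpleGraph.irrefl]
  · rw [G.adj_comm, H.adj_comm]
    exact hadj j i hji

theorem containsInduced_K13 {a x y z : V} (hx : G.Adj a x) (hy : G.Adj a y) (hz : G.Adj a z)
    (hxy : x ≠ y) (hxz : x ≠ z) (hyz : y ≠ z)
    (nxy : ¬ G.Adj x y) (nxz : ¬ G.Adj x z) (nyz : ¬ G.Adj y z) :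
    ContainsInduced G K13 := by
  refine containsInduced_of_forall_lt ![a, x, y, z] (fun i j hij ↦ ?_) (fun i j hij ↦ ?_)
  · have := hx.ne
    have := hy.ne
    have := hz.ne
    fin_cases i <;> fin_cases j <;> simp_all
  · fin_cases i <;> fin_cases j <;> simp_all [K13, graphOfList]

theorem containsInduced_Zgraph_two {a b c d e : V} (hab : G.Adj a b) (hac : G.Adj a c)
    (hbc : G.Adj b c) (hcd : G.Adj c d) (hde : G.Adj d e) (nad : ¬ G.Adj a d) (nbd : ¬ G.Adj b d)
    (nae : ¬ G.Adj a e) (nbe : ¬ G.Adj b e) (nce : ¬ G.Adj c e) :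
    ContainsInduced G (Zgraph 2) := by
  refine containsInduced_of_forall_lt ![a, b, c, d, e] (fun i j hij ↦ ?_) (fun i j hij ↦ ?_)
  · have := hab.ne
    have := hac.ne
    have := hbc.ne
    have := hcd.ne
    have := hde.ne
    have : a ≠ d := by rintro rfl; exact nbd hab.symm
    have : b ≠ d := by rintro rfl; exact nad hab
    have : a ≠ e := by rintro rfl; exact nce hac.symm
    have : b ≠ e := by rintro rfl; exact nce hbc.symm
    have : c ≠ e := by rintro rfl; exact nae hac
    fin_cases i <;> fin_cases j <;> simp_all
  · fin_cases i <;> fin_cases j <;> simp_all [Zgraph]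

end InducedSubgraphs

section CombClique

variable {V : Type*} {G : SimpleGraph V} {C : Set V}

/-- `C` is the central clique of a (possibly infinite) pointed generalized comb whose leaves are
the vertices outside `C`. The number of leaves is not constrained. -/
structure IsCombClique (G : SimpleGraph V) (C : Set V) : Prop where
  isClique : G.IsClique C
  isIndepSet_compl : G.IsIndepSet Cᶜ
  exists_adj : ∀ w ∉ C, ∃ x ∈ C, G.Adj w x
  eq_of_adj : ∀ x ∈ C, ∀ w ∉ C, ∀ w' ∉ C, G.Adj w x → G.Adj w' x → w = w'

namespace IsCombClique

theorem ncard_compl_le [Finite V] (hC : IsCombClique G C) : Cᶜ.ncard ≤ C.ncard := by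
  choose! f hfC hf using hC.exists_adj
  refine Set.ncard_le_ncard_of_injOn f hfC fun w hw w' hw' hww' ↦ ?_
  exact hC.eq_of_adj _ (hfC w hw) w hw w' hw' (hf w hw) (hww' ▸ hf w' hw')

theorem adj_iff (hC : IsCombClique G C) {u v : V} (huv : u ≠ v) :
    G.Adj u v ↔ (u ∈ C ∧ v ∈ C) ∨ (u ∉ C ∧ v ∈ C ∧ G.Adj u v) ∨ (v ∉ C ∧ u ∈ C ∧ G.Adj v u) := by
  have hclique : u ∈ C → v ∈ C → G.Adj u v := fun hu hv ↦ hC.isClique hu hv huv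
  have hindep : u ∉ C → v ∉ C → ¬ G.Adj u v := fun hu hv ↦ hC.isIndepSet_compl hu hv huv
  have hsymm := G.adj_comm u v
  tauto

theorem isPointedGeneralizedComb [Finite V] (hC : IsCombClique G C) (hthree : 3 ≤ Cᶜ.ncard) :
    IsPointedGeneralizedComb G := by
  let e : (Cᶜ : Set V) ≃ Fin Cᶜ.ncard := Finite.equivFin _
  have exists_leaf_iff (w : V) (p : V → Prop) :
      (∃ i, w = e.symm i ∧ p (e.symm i)) ↔ w ∉ C ∧ p w := by
    constructor
    · rintro ⟨i, rfl, hp⟩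
      exact ⟨(e.symm i).2, hp⟩
    · rintro ⟨hw, hp⟩
      exact ⟨e ⟨w, hw⟩, by simpa using hp⟩
  refine ⟨Cᶜ.ncard, fun i ↦ e.symm i, C, fun i ↦ {x | x ∈ C ∧ G.Adj (e.symm i) x}, hthree,
    Subtype.val_injective.comp e.symm.injective, fun i ↦ (e.symm i).2, fun v ↦ ?_,
    hC.ncard_compl_le, fun i ↦ hC.exists_adj _ (e.symm i).2, fun i x hx ↦ hx.1,
    fun i j hij ↦ ?_, fun u v huv ↦ ?_⟩
  · by_cases hv : v ∈ C
    · exact Or.inr hv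
    · exact Or.inl ⟨e ⟨v, hv⟩, by simp⟩
  · refine Set.disjoint_left.2 fun x hxi hxj ↦ hij (e.symm.injective (Subtype.ext ?_))
    exact hC.eq_of_adj x hxi.1 _ (e.symm i).2 _ (e.symm j).2 hxi.2 hxj.2
  · simp only [exists_or, Set.mem_ofPred_eq]
    rw [exists_leaf_iff u fun w ↦ v ∈ C ∧ G.Adj w v, exists_leaf_iff v fun w ↦ u ∈ C ∧ G.Adj w u]
    exact hC.adj_iff huv

end IsCombClique

theorem exists_mem_adj_of_preconnected (hG : G.Preconnected) (hC : C.Nonempty)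
    (h : ∀ w ∉ C, ∀ w' ∉ C, ∀ x ∈ C, G.Adj w x → ¬ G.Adj w w') {v : V} (hv : v ∉ C) :
    ∃ x ∈ C, G.Adj v x := by
  by_contra hvC
  obtain ⟨u, hu⟩ := hC
  obtain ⟨p⟩ := hG u v
  obtain ⟨d, -, hd, hd'⟩ := p.exists_boundary_dart {w | w ∈ C ∨ ∃ x ∈ C, G.Adj w x}
    (Or.inl hu) (not_or.2 ⟨hv, hvC⟩)
  obtain ⟨hd'C, hd'adj⟩ := not_or.1 hd'
  by_cases hdC : d.fst ∈ C
  · exact hd'adj ⟨d.fst, hdC, d.adj.symm⟩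
  · obtain ⟨x, hx, hdx⟩ := hd.resolve_left hdC
    exact h _ hdC _ hd'C x hx hdx d.adj

end CombClique

section Net

variable {V : Type*} {G : SimpleGraph V} {c l : Fin 3 → V}

/-- `c` and `l` list the triangle and the corresponding pendant vertices of an induced net
in `G`. -/
structure IsNet (G : SimpleGraph V) (c l : Fin 3 → V) : Prop where
  adj_center : ∀ ⦃i j⦄, i ≠ j → G.Adj (c i) (c j)
  adj_center_leaf_iff : ∀ i j, G.Adj (c i) (l j) ↔ i = j
  not_adj_leaf_leaf : ∀ i j, ¬ G.Adj (l i) (l j)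

theorem exists_isNet (hN : ContainsInduced G Ngraph) : ∃ c l, IsNet G c l := by
  obtain ⟨f⟩ := hN
  refine ⟨fun i ↦ f (![0, 1, 2] i), fun i ↦ f (![3, 4, 5] i), fun i j ↦ ?_, fun i j ↦ ?_,
    fun i j ↦ ?_⟩ <;>
  · rw [f.map_adj_iff]
    fin_cases i <;> fin_cases j <;> simp [Ngraph, graphOfList]

/-- The vertices equal or adjacent to every vertex of the family `c`. For the triangle of a net
this is the central clique of the comb. -/
def commonClosedNeighbors (G : SimpleGraph V) {ι : Type*} (c : ι → V) : Set V :=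
  {v | ∀ i, v = c i ∨ G.Adj v (c i)}

namespace IsNet

theorem adj_center_leaf (h : IsNet G c l) (i : Fin 3) : G.Adj (c i) (l i) :=
  (h.adj_center_leaf_iff i i).2 rfl

theorem not_adj_center_leaf (h : IsNet G c l) {i j : Fin 3} (hij : i ≠ j) :
    ¬ G.Adj (c i) (l j) :=
  mt (h.adj_center_leaf_iff i j).1 hij

theorem leaf_injective (h : IsNet G c l) : Function.Injective l := fun i j hij ↦
  (h.adj_center_leaf_iff i j).1 (hij ▸ h.adj_center_leaf i)

theorem center_ne_leaf (h : IsNet G c l) (i j : Fin 3) : c i ≠ l j := by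
  intro hij
  obtain ⟨k, hki, hkj⟩ := exists_fin_three_ne_ne i j
  exact h.not_adj_center_leaf hkj (hij ▸ h.adj_center hki)

theorem center_mem (h : IsNet G c l) (i : Fin 3) : c i ∈ commonClosedNeighbors G c := by
  intro j
  rcases eq_or_ne i j with rfl | hij
  · exact Or.inl rfl
  · exact Or.inr (h.adj_center hij)

theorem leaf_notMem (h : IsNet G c l) (i : Fin 3) : l i ∉ commonClosedNeighbors G c := by
  intro hi
  obtain ⟨k, hki, -⟩ := exists_fin_three_ne_ne i i
  rcases hi k with hik | hik
  · exact h.center_ne_leaf k i hik.symm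
  · exact h.not_adj_center_leaf hki hik.symm

theorem adj_leaf_or_adj_leaf (h : IsNet G c l) (hK13 : ¬ ContainsInduced G K13) {v y : V}
    {i j : Fin 3} (hij : i ≠ j) (hvi : G.Adj v (l i)) (hvj : G.Adj v (l j)) (hvy : G.Adj v y)
    (hyi : y ≠ l i) (hyj : y ≠ l j) : G.Adj y (l i) ∨ G.Adj y (l j) := by
  by_contra! hy
  exact hK13 (containsInduced_K13 hvy hvi hvj hyi hyj (h.leaf_injective.ne hij) hy.1 hy.2
    (h.not_adj_leaf_leaf i j))

theorem not_adj_center_of_adj_leaf_leaf (h : IsNet G c l) (hK13 : ¬ ContainsInduced G K13)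
    {v : V} {i j k : Fin 3} (hij : i ≠ j) (hki : k ≠ i) (hkj : k ≠ j) (hvi : G.Adj v (l i))
    (hvj : G.Adj v (l j)) : ¬ G.Adj v (c k) := fun hvk ↦
  (h.adj_leaf_or_adj_leaf hK13 hij hvi hvj hvk (h.center_ne_leaf k i) (h.center_ne_leaf k j)).elim
    (h.not_adj_center_leaf hki) (h.not_adj_center_leaf hkj)

theorem not_adj_leaf_of_adj_leaf_leaf (h : IsNet G c l) (hK13 : ¬ ContainsInduced G K13)
    {v : V} {i j k : Fin 3} (hij : i ≠ j) (hki : k ≠ i) (hkj : k ≠ j) (hvi : G.Adj v (l i))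
    (hvj : G.Adj v (l j)) : ¬ G.Adj v (l k) := fun hvk ↦
  (h.adj_leaf_or_adj_leaf hK13 hij hvi hvj hvk (h.leaf_injective.ne hki)
    (h.leaf_injective.ne hkj)).elim (h.not_adj_leaf_leaf k i) (h.not_adj_leaf_leaf k j)

theorem adj_leaf_of_not_adj_center (h : IsNet G c l) (hZ2 : ¬ ContainsInduced G (Zgraph 2))
    {v : V} {i j : Fin 3} (hij : i ≠ j) (hvc : G.Adj v (c i)) (hvl : G.Adj v (l i))
    (hvj : ¬ G.Adj v (c j)) : G.Adj v (l j) := by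
  by_contra hvlj
  exact hZ2 (containsInduced_Zgraph_two hvl hvc (h.adj_center_leaf i).symm (h.adj_center hij)
    (h.adj_center_leaf j) hvj (fun hlc ↦ h.not_adj_center_leaf hij.symm hlc.symm) hvlj
    (h.not_adj_leaf_leaf i j) (h.not_adj_center_leaf hij))

theorem mem_of_adj_center (h : IsNet G c l) (hK13 : ¬ ContainsInduced G K13)
    (hZ2 : ¬ ContainsInduced G (Zgraph 2)) {v : V} {i : Fin 3} (hvi : G.Adj v (c i))
    (hv : v ≠ l i) : v ∈ commonClosedNeighbors G c := by
  refine fun j ↦ or_iff_not_imp_left.2 fun hvcj ↦ ?_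
  by_contra hvj
  have hij : i ≠ j := by rintro rfl; exact hvj hvi
  obtain ⟨k, hki, hkj⟩ := exists_fin_three_ne_ne i j
  have hvli : G.Adj v (l i) := by
    by_contra hvli
    exact hK13 (containsInduced_K13 hvi.symm (h.adj_center hij) (h.adj_center_leaf i) hvcj hv
      (h.center_ne_leaf j i) hvj hvli (h.not_adj_center_leaf hij.symm))
  have hvlj : G.Adj v (l j) := h.adj_leaf_of_not_adj_center hZ2 hij hvi hvli hvj
  have hvk : ¬ G.Adj v (c k) := h.not_adj_center_of_adj_leaf_leaf hK13 hij hki hkj hvli hvlj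
  exact h.not_adj_leaf_of_adj_leaf_leaf hK13 hij hki hkj hvli hvlj
    (h.adj_leaf_of_not_adj_center hZ2 hki.symm hvi hvli hvk)

theorem eq_leaf_of_adj_center (h : IsNet G c l) (hK13 : ¬ ContainsInduced G K13)
    (hZ2 : ¬ ContainsInduced G (Zgraph 2)) {v : V} {i : Fin 3}
    (hv : v ∉ commonClosedNeighbors G c) (hvi : G.Adj v (c i)) : v = l i :=
  not_imp_comm.1 (h.mem_of_adj_center hK13 hZ2 hvi) hv

theorem subsingleton_adj_leaf (h : IsNet G c l) (hK13 : ¬ ContainsInduced G K13) {v : V}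
    (hv : v ∈ commonClosedNeighbors G c) : {i | G.Adj v (l i)}.Subsingleton := by
  intro i hi j hj
  by_contra hij
  obtain ⟨k, hki, hkj⟩ := exists_fin_three_ne_ne i j
  rcases hv k with rfl | hvk
  · exact h.not_adj_center_leaf hki hi
  · exact h.not_adj_center_of_adj_leaf_leaf hK13 hij hki hkj hi hj hvk

theorem subsingleton_adj_center (h : IsNet G c l) (hK13 : ¬ ContainsInduced G K13)
    (hZ2 : ¬ ContainsInduced G (Zgraph 2)) {v : V} (hv : v ∉ commonClosedNeighbors G c) :
    {i | G.Adj v (c i)}.Subsingleton := fun _ hi _ hj ↦ h.leaf_injective <|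
  (h.eq_leaf_of_adj_center hK13 hZ2 hv hi).symm.trans (h.eq_leaf_of_adj_center hK13 hZ2 hv hj)

theorem isClique_commonClosedNeighbors (h : IsNet G c l) (hK13 : ¬ ContainsInduced G K13) :
    G.IsClique (commonClosedNeighbors G c) := by
  intro u hu v hv huv
  by_contra hadj
  obtain ⟨i, hui, hvi⟩ := exists_notMem_notMem_of_subsingleton (by norm_num)
    (h.subsingleton_adj_leaf hK13 hu) (h.subsingleton_adj_leaf hK13 hv)
  have adj_center_of_mem {w : V} (hw : w ∈ commonClosedNeighbors G c) (hwi : ¬ G.Adj w (l i)) :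
      G.Adj (c i) w :=
    ((hw i).resolve_left (by rintro rfl; exact hwi (h.adj_center_leaf i))).symm
  exact hK13 (containsInduced_K13 (adj_center_of_mem hu hui) (adj_center_of_mem hv hvi)
    (h.adj_center_leaf i) huv (ne_of_mem_of_not_mem hu (h.leaf_notMem i))
    (ne_of_mem_of_not_mem hv (h.leaf_notMem i)) hadj hui hvi)

theorem not_adj_leaf_of_notMem (h : IsNet G c l) (hK13 : ¬ ContainsInduced G K13)
    (hZ2 : ¬ ContainsInduced G (Zgraph 2)) {v : V} (hv : v ∉ commonClosedNeighbors G c)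
    (i : Fin 3) : ¬ G.Adj v (l i) := by
  intro hvi
  have hvc (j : Fin 3) : ¬ G.Adj (c j) v := by
    intro hjv
    obtain rfl := h.eq_leaf_of_adj_center hK13 hZ2 hv hjv.symm
    exact h.not_adj_leaf_leaf j i hvi
  obtain ⟨j, hji, -⟩ := exists_fin_three_ne_ne i i
  obtain ⟨k, hki, hkj⟩ := exists_fin_three_ne_ne i j
  exact hZ2 (containsInduced_Zgraph_two (h.adj_center hkj.symm) (h.adj_center hji)
    (h.adj_center hki) (h.adj_center_leaf i) hvi.symm (h.not_adj_center_leaf hji)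
    (h.not_adj_center_leaf hki) (hvc j) (hvc k) (hvc i))

theorem not_adj_center_of_adj_notMem (h : IsNet G c l) (hK13 : ¬ ContainsInduced G K13)
    (hZ2 : ¬ ContainsInduced G (Zgraph 2)) {w w' : V} (hw : w ∉ commonClosedNeighbors G c)
    (hw' : w' ∉ commonClosedNeighbors G c) (hww' : G.Adj w w') (i : Fin 3) :
    ¬ G.Adj w (c i) := by
  intro hwi
  obtain rfl := h.eq_leaf_of_adj_center hK13 hZ2 hw hwi
  exact h.not_adj_leaf_of_notMem hK13 hZ2 hw' i hww'.symm

theorem not_adj_of_adj_mem (h : IsNet G c l) (hK13 : ¬ ContainsInduced G K13)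
    (hZ2 : ¬ ContainsInduced G (Zgraph 2)) {w w' x : V} (hw : w ∉ commonClosedNeighbors G c)
    (hw' : w' ∉ commonClosedNeighbors G c) (hx : x ∈ commonClosedNeighbors G c)
    (hwx : G.Adj w x) : ¬ G.Adj w w' := by
  intro hww'
  have hwc := h.not_adj_center_of_adj_notMem hK13 hZ2 hw hw' hww'
  have hwc' := h.not_adj_center_of_adj_notMem hK13 hZ2 hw' hw hww'.symm
  have hxc (i : Fin 3) : G.Adj x (c i) :=
    (hx i).resolve_left (by rintro rfl; exact hwc i hwx)
  by_cases hw'x : G.Adj w' x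
  · obtain ⟨i, hxi, -⟩ := exists_notMem_notMem_of_subsingleton (by norm_num)
      (h.subsingleton_adj_leaf hK13 hx) Set.subsingleton_empty
    exact hZ2 (containsInduced_Zgraph_two hww' hwx hw'x (hxc i) (h.adj_center_leaf i) (hwc i)
      (hwc' i) (h.not_adj_leaf_of_notMem hK13 hZ2 hw i) (h.not_adj_leaf_of_notMem hK13 hZ2 hw' i)
      hxi)
  · exact hZ2 (containsInduced_Zgraph_two (h.adj_center zero_ne_one) (hxc 0).symm (hxc 1).symm
      hwx.symm hww' (mt Adj.symm (hwc 0)) (mt Adj.symm (hwc 1)) (mt Adj.symm (hwc' 0))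
      (mt Adj.symm (hwc' 1)) (mt Adj.symm hw'x))

theorem eq_of_adj_mem (h : IsNet G c l) (hK13 : ¬ ContainsInduced G K13)
    (hZ2 : ¬ ContainsInduced G (Zgraph 2)) {w w' x : V} (hw : w ∉ commonClosedNeighbors G c)
    (hw' : w' ∉ commonClosedNeighbors G c) (hx : x ∈ commonClosedNeighbors G c)
    (hwx : G.Adj w x) (hw'x : G.Adj w' x) : w = w' := by
  by_contra hne
  obtain ⟨i, hwi, hwi'⟩ := exists_notMem_notMem_of_subsingleton (by norm_num)
    (h.subsingleton_adj_center hK13 hZ2 hw) (h.subsingleton_adj_center hK13 hZ2 hw')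
  have hxi : G.Adj x (c i) := (hx i).resolve_left (by rintro rfl; exact hwi hwx)
  exact hK13 (containsInduced_K13 hwx.symm hw'x.symm hxi hne
    (ne_of_mem_of_not_mem (h.center_mem i) hw).symm
    (ne_of_mem_of_not_mem (h.center_mem i) hw').symm
    (h.not_adj_of_adj_mem hK13 hZ2 hw hw' hx hwx) hwi hwi')

theorem isCombClique (h : IsNet G c l) (hG : G.Preconnected)
    (hK13 : ¬ ContainsInduced G K13) (hZ2 : ¬ ContainsInduced G (Zgraph 2)) :
    IsCombClique G (commonClosedNeighbors G c) := by
  have exists_adj (w : V) (hw : w ∉ commonClosedNeighbors G c) :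
      ∃ x ∈ commonClosedNeighbors G c, G.Adj w x :=
    exists_mem_adj_of_preconnected hG ⟨c 0, h.center_mem 0⟩
      (fun _ hu _ hu' _ ↦ h.not_adj_of_adj_mem hK13 hZ2 hu hu') hw
  refine ⟨h.isClique_commonClosedNeighbors hK13, fun w hw w' hw' _ ↦ ?_, exists_adj,
    fun x hx w hw w' hw' ↦ h.eq_of_adj_mem hK13 hZ2 hw hw' hx⟩
  obtain ⟨x, hx, hwx⟩ := exists_adj w hw
  exact h.not_adj_of_adj_mem hK13 hZ2 hw hw' hx hwx

theorem three_le_ncard_compl [Finite V] (h : IsNet G c l) :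
    3 ≤ (commonClosedNeighbors G c)ᶜ.ncard :=
  calc
    3 = (Set.range l).ncard := by
      rw [Set.ncard_range_of_injective h.leaf_injective, Nat.card_fin]
    _ ≤ (commonClosedNeighbors G c)ᶜ.ncard :=
      Set.ncard_le_ncard (Set.range_subset_iff.2 h.leaf_notMem)

end IsNet

end Net

/-- **Lemma 2.1 (Statement 4).** Let `G` be a connected `{K_{1,3}, Z₂}`-free graph which
contains the net `N` as an induced subgraph.  Then `G` is a pointed generalized comb. -/
theorem stmt4 {V : Type*} [Fintype V] (G : SimpleGraph V) (hconn : G.Connected)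
    (hK13 : ¬ ContainsInduced G K13) (hZ2 : ¬ ContainsInduced G (Zgraph 2))
    (hN : ContainsInduced G Ngraph) :
    IsPointedGeneralizedComb G := by
  obtain ⟨c, l, hnet⟩ := exists_isNet hN
  have hC := hnet.isCombClique hconn.preconnected hK13 hZ2
  exact hC.isPointedGeneralizedComb hnet.three_le_ncard_compl
end

section
/- Let G be a connected {K_{1,3}, Z_2, N}-free graph which contains as an induced subgraph a graph H = H_2({C_{t_3}, C_{t_4}}), where C_{t_3} and C_{t_4} are vertex-disjoint nonempty cliques. Then for each vertex a ∈ V(G) − V(H) with N_G(a) ∩ V(H) ≠ ∅, one of the following holds: (i) G[V(H) ∪ {a}] ∈ ℋ_2; (ii) for some i ∈ {3,4}, N_G(a) ∩ V(H) = {t_1, t_{i+2}} ∪ C_{t_i} and |C_{t_{7−i}}| = 1 (and then G[V(H) ∪ {a}] ∈ ℋ_5); or (iii) N_G(a) ∩ V(H) = {t_1, t_2, t_5, t_6} and |C_{t_3}| = |C_{t_4}| = 1 (and then G[V(H) ∪ {a}] ∈ ℋ_6). -/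
open SimpleGraph

/-- The graph `H₁ ≅ B_{1,1}` with vertices `s₁,…,s₅` encoded as `0,…,4`;
its expandable vertices are `s₃,s₄,s₅`, i.e. `{2,3,4}`. -/
def HGraph1 : SimpleGraph (Fin 5) :=
  graphOfList 5 [(0,2), (1,3), (2,3), (2,4), (3,4)]

/-- The graph `H₂` with vertices `t₁,…,t₆` encoded as `0,…,5`;
its expandable vertices are `t₃,t₄`, i.e. `{2,3}`. -/
def HGraph2 : SimpleGraph (Fin 6) :=
  graphOfList 6 [(0,1), (1,2), (1,3), (2,3), (2,4), (3,5), (4,5)]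

/-- The graph `H₃` with vertices `u₁,…,u₆` encoded as `0,…,5`;
its expandable vertex is `u₆`, i.e. `{5}`. -/
def HGraph3 : SimpleGraph (Fin 6) :=
  graphOfList 6 [(0,1), (0,2), (1,3), (1,5), (2,4), (2,5), (3,5), (4,5)]

/-- The graph `H₄` with vertices `v₁,…,v₆` encoded as `0,…,5`;
its expandable vertices are `v₄,v₅,v₆`, i.e. `{3,4,5}`. -/
def HGraph4 : SimpleGraph (Fin 6) :=
  graphOfList 6 [(0,1), (0,5), (1,4), (2,4), (2,5), (3,4), (3,5), (4,5)]

/-- The graph `H₅` with vertices `w₁,…,w₇` encoded as `0,…,6`: the 6-cycle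
`w₁w₃w₄w₂w₆w₅w₁` together with `w₇` adjacent to exactly `w₃,w₄,w₅,w₆`;
its expandable vertex is `w₇`, i.e. `{6}`. -/
def HGraph5 : SimpleGraph (Fin 7) :=
  graphOfList 7 [(0,2), (2,3), (3,1), (1,5), (5,4), (4,0), (6,2), (6,3), (6,4), (6,5)]

/-- The graph `H₆` with vertices `x₁,…,x₇` encoded as `0,…,6`. -/
def HGraph6 : SimpleGraph (Fin 7) :=
  graphOfList 7 [(0,1), (0,2), (0,4), (1,3), (1,5), (2,3), (2,4), (3,5), (4,5), (4,6), (5,6)]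

/-- The graph `H₇` with vertices `y₁,…,y₈` encoded as `0,…,7`. -/
def HGraph7 : SimpleGraph (Fin 8) :=
  graphOfList 8 [(0,1), (0,2), (0,4), (1,3), (1,5), (2,3), (2,4), (2,6), (3,5), (3,6),
    (4,5), (4,7), (5,7), (6,7)]

/-- `G` is obtained (up to isomorphism) from the graph `H` (on `Fin n`) by expanding each
vertex in `U` to a nonempty clique, vertices outside `U` being kept as single vertices.
The map `g` sends each vertex of `G` to the vertex of `H` it arises from: fibers are the
expansion cliques, fibers over non-expandable vertices are singletons, and two distinct
vertices of `G` are adjacent iff they lie in the same fiber or their images are adjacent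
in `H`.  (For `U = ∅` this says exactly that `G` is isomorphic to `H`.) -/
def IsExpansionOf {V : Type*} (G : SimpleGraph V) {n : ℕ} (H : SimpleGraph (Fin n))
    (U : Set (Fin n)) : Prop :=
  ∃ g : V → Fin n, Function.Surjective g ∧
    (∀ i : Fin n, i ∉ U → ∀ u v : V, g u = i → g v = i → u = v) ∧
    (∀ u v : V, G.Adj u v ↔ ((g u = g v ∧ u ≠ v) ∨ H.Adj (g u) (g v)))

/-!
Choose one vertex from each of the six parts of `H₂({C_{t₃}, C_{t₄}})`. Since `G` is claw-free and
`Z₂`-free, `a` can attach to the resulting copy of `H₂` in only six ways (one of them empty). Any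
two of these sets of labels differ in at least two places, so exchanging a single representative
never changes the set: whether `a` is adjacent to a vertex depends only on the part that contains
it. Hence adding `a` yields an expansion of `H₂`, `H₅` or `H₆`, where a priori every vertex may be
expanded. But in a `Z₂`-free graph the starting vertex of an induced `P₄` cannot be expanded,
since two vertices of its clique would form a `Z₂` with the rest of the path; this leaves just the
expandable vertices of `H₂`, `H₅` and `H₆`, and forces the asserted `|C_{t_i}| = 1`.
-/

section InducedSubgraphs

variable {V : Type*} {G : SimpleGraph V}

theorem containsInduced_of_forall_lt_s6 {n : ℕ} {H : SimpleGraph (Fin n)} (x : Fin n → V)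
    (hx : ∀ i j, i < j → x i ≠ x j ∧ (G.Adj (x i) (x j) ↔ H.Adj i j)) : ContainsInduced G H := by
  have hinj : Function.Injective x := fun i j hij => by
    by_contra hne
    rcases lt_or_gt_of_ne hne with hlt | hlt
    · exact (hx i j hlt).1 hij
    · exact (hx j i hlt).1 hij.symm
  refine ⟨⟨⟨x, hinj⟩, fun {i j} => ?_⟩⟩
  change G.Adj (x i) (x j) ↔ H.Adj i j
  rcases lt_trichotomy i j with hij | rfl | hij
  · exact (hx i j hij).2
  · simp
  · simpa only [G.adj_comm, H.adj_comm] using (hx j i hij).2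

theorem adj_or_adj_or_adj_of_claw_free (hG : ¬ ContainsInduced G K13) {c x y z : V}
    (hcx : G.Adj c x) (hcy : G.Adj c y) (hcz : G.Adj c z) (hxy : x ≠ y) (hxz : x ≠ z)
    (hyz : y ≠ z) : G.Adj x y ∨ G.Adj x z ∨ G.Adj y z := by
  by_contra! h
  refine hG (containsInduced_of_forall_lt_s6 ![c, x, y, z] ?_)
  simp [Fin.forall_fin_succ, K13, graphOfList, hcx.ne, hcy.ne, hcz.ne, *]

theorem adj_of_Z2_free (hG : ¬ ContainsInduced G (Zgraph 2)) {x y z u v : V}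
    (hxy : G.Adj x y) (hxz : G.Adj x z) (hyz : G.Adj y z) (hzu : G.Adj z u) (huv : G.Adj u v) :
    G.Adj x u ∨ G.Adj x v ∨ G.Adj y u ∨ G.Adj y v ∨ G.Adj z v := by
  by_contra! h
  obtain ⟨nxu, nxv, nyu, nyv, nzv⟩ := h
  have xu : x ≠ u := fun h => nxv (h ▸ huv)
  have xv : x ≠ v := fun h => nyv (h ▸ hxy.symm)
  have yu : y ≠ u := fun h => nyv (h ▸ huv)
  have yv : y ≠ v := fun h => nxv (h ▸ hxy)
  have zv : z ≠ v := fun h => nxv (h ▸ hxz)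
  refine hG (containsInduced_of_forall_lt_s6 ![x, y, z, u, v] ?_)
  simp [Fin.forall_fin_succ, Zgraph, hxy.ne, hxz.ne, hyz.ne, hzu.ne, huv.ne, *]

/-- `i, p, q, r` are the consecutive vertices of an induced path `P₄` of `H`. -/
abbrev IsInducedP4 {W : Type*} (H : SimpleGraph W) (i p q r : W) : Prop :=
  H.Adj i p ∧ H.Adj p q ∧ H.Adj q r ∧ ¬ H.Adj i q ∧ ¬ H.Adj i r ∧ ¬ H.Adj p r

end InducedSubgraphs

section Attachment

variable {V W : Type*} {G : SimpleGraph V} {H : SimpleGraph W} {a : V}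

theorem not_adj_of_independent_of_claw_free (hG : ¬ ContainsInduced G K13) (f : H ↪g G)
    {i j k : W} (hH : i ≠ j ∧ i ≠ k ∧ j ≠ k ∧ ¬ H.Adj i j ∧ ¬ H.Adj i k ∧ ¬ H.Adj j k)
    (hi : G.Adj a (f i)) (hj : G.Adj a (f j)) : ¬ G.Adj a (f k) := by
  intro hk
  obtain ⟨ij, ik, jk, hij, hik, hjk⟩ := hH
  have := adj_or_adj_or_adj_of_claw_free hG hi hj hk (f.injective.ne ij) (f.injective.ne ik)
    (f.injective.ne jk)
  simp only [f.map_adj_iff] at this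
  tauto

theorem adj_or_adj_of_claw_free (hG : ¬ ContainsInduced G K13) (f : H ↪g G)
    (ha : a ∉ Set.range f) {i j k : W} (hH : H.Adj i j ∧ H.Adj i k ∧ j ≠ k ∧ ¬ H.Adj j k)
    (hi : G.Adj a (f i)) : G.Adj a (f j) ∨ G.Adj a (f k) := by
  obtain ⟨hij, hik, jk, hjk⟩ := hH
  have hne (l : W) : a ≠ f l := fun h => ha ⟨l, h.symm⟩
  have := adj_or_adj_or_adj_of_claw_free hG hi.symm (f.map_adj_iff.2 hij) (f.map_adj_iff.2 hik)
    (hne j) (hne k) (f.injective.ne jk)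
  simpa only [f.map_adj_iff, hjk, or_false] using this

theorem adj_or_adj_of_isInducedP4 (hG : ¬ ContainsInduced G (Zgraph 2)) (f : H ↪g G)
    {i j k l : W} (hH : IsInducedP4 H i j k l) (hi : G.Adj a (f i)) (hj : G.Adj a (f j)) :
    G.Adj a (f k) ∨ G.Adj a (f l) := by
  obtain ⟨hij, hjk, hkl, nik, nil, njl⟩ := hH
  have := adj_of_Z2_free hG hi hj (f.map_adj_iff.2 hij) (f.map_adj_iff.2 hjk)
    (f.map_adj_iff.2 hkl)
  simpa only [f.map_adj_iff, nik, nil, njl, or_false] using this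

theorem adj_of_induced_two_edges (hG : ¬ ContainsInduced G (Zgraph 2)) (f : H ↪g G)
    {i j k l : W} (hH : H.Adj i j ∧ H.Adj k l ∧ ¬ H.Adj i k ∧ ¬ H.Adj i l ∧ ¬ H.Adj j k ∧
      ¬ H.Adj j l)
    (hi : G.Adj a (f i)) (hj : G.Adj a (f j)) (hk : G.Adj a (f k)) : G.Adj a (f l) := by
  obtain ⟨hij, hkl, nik, nil, njk, njl⟩ := hH
  have := adj_of_Z2_free hG (f.map_adj_iff.2 hij) hi.symm hj.symm hk (f.map_adj_iff.2 hkl)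
  simpa only [f.map_adj_iff, nik, nil, njk, njl, false_or] using this

theorem adj_of_induced_paw (hG : ¬ ContainsInduced G (Zgraph 2)) (f : H ↪g G) {i j k l : W}
    (hH : H.Adj i j ∧ H.Adj i k ∧ H.Adj j k ∧ H.Adj k l ∧ ¬ H.Adj i l ∧ ¬ H.Adj j l)
    (hl : G.Adj a (f l)) : G.Adj a (f i) ∨ G.Adj a (f j) ∨ G.Adj a (f k) := by
  obtain ⟨hij, hik, hjk, hkl, nil, njl⟩ := hH
  have := adj_of_Z2_free hG (f.map_adj_iff.2 hij) (f.map_adj_iff.2 hik) (f.map_adj_iff.2 hjk)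
    (f.map_adj_iff.2 hkl) hl.symm
  simpa only [f.map_adj_iff, nil, njl, false_or, G.adj_comm _ a] using this

end Attachment

instance {n : ℕ} (E : List (Fin n × Fin n)) : DecidableRel (graphOfList n E).Adj :=
  inferInstanceAs (DecidableRel fun a b => a ≠ b ∧ ((a, b) ∈ E ∨ (b, a) ∈ E))

instance : DecidableRel HGraph2.Adj := inferInstanceAs (DecidableRel (graphOfList 6 _).Adj)

instance : DecidableRel HGraph5.Adj := inferInstanceAs (DecidableRel (graphOfList 7 _).Adj)

instance : DecidableRel HGraph6.Adj := inferInstanceAs (DecidableRel (graphOfList 7 _).Adj)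

section AttachmentToH2

variable {V : Type*} {G : SimpleGraph V} {a : V}

/-- The sets of labels that can be the neighborhood, inside an induced copy of `H₂`, of a vertex
outside that copy. -/
def h2Attachments : Finset (Finset (Fin 6)) :=
  {∅, {1, 2, 3, 4}, {1, 2, 3, 5}, {0, 2, 4}, {0, 3, 5}, {0, 1, 4, 5}}

set_option maxRecDepth 10000 in
theorem eq_of_mem_h2Attachments : ∀ A ∈ h2Attachments, ∀ B ∈ h2Attachments, ∀ i : Fin 6,
    (∀ j ≠ i, j ∈ A ↔ j ∈ B) → A = B := by
  decide

theorem exists_h2Attachment_of_not_adj_zero (hK13 : ¬ ContainsInduced G K13)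
    (hZ2 : ¬ ContainsInduced G (Zgraph 2)) (f : HGraph2 ↪g G) (ha : a ∉ Set.range f)
    (h0 : ¬ G.Adj a (f 0)) : ∃ A ∈ h2Attachments, ∀ i, G.Adj a (f i) ↔ i ∈ A := by
  by_cases h1 : G.Adj a (f 1)
  · have h2 : G.Adj a (f 2) :=
      (adj_or_adj_of_claw_free hK13 f ha (j := 0) (by decide) h1).resolve_left h0
    have h3 : G.Adj a (f 3) :=
      (adj_or_adj_of_claw_free hK13 f ha (j := 0) (by decide) h1).resolve_left h0
    have h54 : G.Adj a (f 5) ∨ G.Adj a (f 4) :=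
      adj_or_adj_of_isInducedP4 hZ2 f (by decide) h1 h3
    have h45 : ¬ (G.Adj a (f 4) ∧ G.Adj a (f 5)) := fun h =>
      h0 (adj_of_induced_two_edges hZ2 f (by decide) h.1 h.2 h1)
    rcases h54 with h5 | h4
    · have h4 : ¬ G.Adj a (f 4) := fun h4 => h45 ⟨h4, h5⟩
      exact ⟨{1, 2, 3, 5}, by decide, by simp [Fin.forall_fin_succ, h0, h1, h2, h3, h4, h5]⟩
    · have h5 : ¬ G.Adj a (f 5) := fun h5 => h45 ⟨h4, h5⟩
      exact ⟨{1, 2, 3, 4}, by decide, by simp [Fin.forall_fin_succ, h0, h1, h2, h3, h4, h5]⟩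
  · have h2 : ¬ G.Adj a (f 2) := fun h2 => by
      have h4 : G.Adj a (f 4) :=
        (adj_or_adj_of_claw_free hK13 f ha (j := 1) (by decide) h2).resolve_left h1
      exact (adj_or_adj_of_isInducedP4 hZ2 f (by decide) h4 h2).elim h1 h0
    have h3 : ¬ G.Adj a (f 3) := fun h3 => by
      have h5 : G.Adj a (f 5) :=
        (adj_or_adj_of_claw_free hK13 f ha (j := 1) (by decide) h3).resolve_left h1
      exact (adj_or_adj_of_isInducedP4 hZ2 f (by decide) h5 h3).elim h1 h0
    have h4 : ¬ G.Adj a (f 4) := fun h4 =>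
      (adj_of_induced_paw hZ2 f (by decide) h4).elim h1 (Or.elim · h3 h2)
    have h5 : ¬ G.Adj a (f 5) := fun h5 =>
      (adj_of_induced_paw hZ2 f (by decide) h5).elim h1 (Or.elim · h2 h3)
    exact ⟨∅, by decide, by simp [Fin.forall_fin_succ, h0, h1, h2, h3, h4, h5]⟩

theorem exists_h2Attachment_of_adj_zero (hK13 : ¬ ContainsInduced G K13)
    (hZ2 : ¬ ContainsInduced G (Zgraph 2)) (f : HGraph2 ↪g G) (ha : a ∉ Set.range f)
    (h0 : G.Adj a (f 0)) : ∃ A ∈ h2Attachments, ∀ i, G.Adj a (f i) ↔ i ∈ A := by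
  have h25 : G.Adj a (f 2) → ¬ G.Adj a (f 5) :=
    not_adj_of_independent_of_claw_free hK13 f (by decide) h0
  have h34 : G.Adj a (f 3) → ¬ G.Adj a (f 4) :=
    not_adj_of_independent_of_claw_free hK13 f (by decide) h0
  by_cases h1 : G.Adj a (f 1)
  · have h24 : G.Adj a (f 2) ∨ G.Adj a (f 4) :=
      adj_or_adj_of_isInducedP4 hZ2 f (by decide) h0 h1
    have h45 : G.Adj a (f 4) ↔ G.Adj a (f 5) :=
      ⟨adj_of_induced_two_edges hZ2 f (by decide) h0 h1,
        adj_of_induced_two_edges hZ2 f (by decide) h0 h1⟩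
    have h2 : ¬ G.Adj a (f 2) := fun h2 =>
      (adj_or_adj_of_isInducedP4 hZ2 f (k := 4) (l := 5) (by decide) h1 h2).elim
        (fun h4 => h25 h2 (h45.1 h4)) (h25 h2)
    have h4 : G.Adj a (f 4) := h24.resolve_left h2
    have h5 : G.Adj a (f 5) := h45.1 h4
    have h3 : ¬ G.Adj a (f 3) := fun h3 => h34 h3 h4
    exact ⟨{0, 1, 4, 5}, by decide, by simp [Fin.forall_fin_succ, h0, h1, h2, h3, h4, h5]⟩
  · have h231 : G.Adj a (f 2) ∨ G.Adj a (f 3) ∨ G.Adj a (f 1) :=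
      adj_of_induced_paw hZ2 f (by decide) h0
    rcases h231 with h2 | h3 | h1'
    · have h4 : G.Adj a (f 4) :=
        (adj_or_adj_of_claw_free hK13 f ha (j := 1) (by decide) h2).resolve_left h1
      have h5 : ¬ G.Adj a (f 5) := h25 h2
      have h3 : ¬ G.Adj a (f 3) := fun h3 => h34 h3 h4
      exact ⟨{0, 2, 4}, by decide, by simp [Fin.forall_fin_succ, h0, h1, h2, h3, h4, h5]⟩
    · have h5 : G.Adj a (f 5) :=
        (adj_or_adj_of_claw_free hK13 f ha (j := 1) (by decide) h3).resolve_left h1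
      have h4 : ¬ G.Adj a (f 4) := h34 h3
      have h2 : ¬ G.Adj a (f 2) := fun h2 => h25 h2 h5
      exact ⟨{0, 3, 5}, by decide, by simp [Fin.forall_fin_succ, h0, h1, h2, h3, h4, h5]⟩
    · exact absurd h1' h1

theorem exists_h2Attachment (hK13 : ¬ ContainsInduced G K13)
    (hZ2 : ¬ ContainsInduced G (Zgraph 2)) (f : HGraph2 ↪g G) (ha : a ∉ Set.range f) :
    ∃ A ∈ h2Attachments, ∀ i, G.Adj a (f i) ↔ i ∈ A := by
  by_cases h0 : G.Adj a (f 0)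
  · exact exists_h2Attachment_of_adj_zero hK13 hZ2 f ha h0
  · exact exists_h2Attachment_of_not_adj_zero hK13 hZ2 f ha h0

end AttachmentToH2

/-- `φ` exhibits `G[S]` as an expansion of `H`, every vertex of `H` being expandable: the vertex
`i` is expanded to the clique of the vertices of `S` labelled `i`. Which cliques are single
vertices is then a property of `φ`. -/
structure IsExpansionOn {V W : Type*} (G : SimpleGraph V) (S : Set V) (H : SimpleGraph W)
    (φ : V → W) : Prop where
  exists_mem (i : W) : ∃ x ∈ S, φ x = i
  adj_iff {u v : V} (hu : u ∈ S) (hv : v ∈ S) :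
    G.Adj u v ↔ (φ u = φ v ∧ u ≠ v) ∨ H.Adj (φ u) (φ v)

namespace IsExpansionOn

variable {V W W' : Type*} {G : SimpleGraph V} {S : Set V} {H : SimpleGraph W} {φ : V → W}
  {H' : SimpleGraph W'} {a : V}

/-- The induced copy of `H` picked out by a system of representatives of the cliques. -/
def transversal (h : IsExpansionOn G S H φ) (x : W → V) (hx : ∀ i, x i ∈ S ∧ φ (x i) = i) :
    H ↪g G where
  toFun := x
  inj' i j hij := by rw [← (hx i).2, hij, (hx j).2]
  map_rel_iff' {i j} := by
    change G.Adj (x i) (x j) ↔ H.Adj i j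
    rw [h.adj_iff (hx i).1 (hx j).1, (hx i).2, (hx j).2]
    exact or_iff_right fun hij => hij.2 (congrArg x hij.1)

@[simp]
theorem coe_transversal (h : IsExpansionOn G S H φ) (x : W → V)
    (hx : ∀ i, x i ∈ S ∧ φ (x i) = i) : ⇑(h.transversal x hx) = x :=
  rfl

theorem eq_of_label_eq (h : IsExpansionOn G S H φ) (hZ2 : ¬ ContainsInduced G (Zgraph 2))
    {u v : V} (hu : u ∈ S) (hv : v ∈ S) (huv : φ u = φ v)
    (hP : ∃ p q r, IsInducedP4 H (φ u) p q r) : u = v := by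
  obtain ⟨i, j, k, hup, hpq, hqr, nuq, nur, npr⟩ := hP
  obtain ⟨p, hp, rfl⟩ := h.exists_mem i
  obtain ⟨q, hq, rfl⟩ := h.exists_mem j
  obtain ⟨r, hr, rfl⟩ := h.exists_mem k
  by_contra hne
  have := adj_of_Z2_free hZ2 ((h.adj_iff hu hv).2 (Or.inl ⟨huv, hne⟩))
    ((h.adj_iff hu hp).2 (Or.inr hup)) ((h.adj_iff hv hp).2 (Or.inr (huv ▸ hup)))
    ((h.adj_iff hp hq).2 (Or.inr hpq)) ((h.adj_iff hq hr).2 (Or.inr hqr))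
  have huq : φ u ≠ φ q := fun e => nur (e ▸ hqr)
  have hur : φ u ≠ φ r := fun e => nuq (e ▸ hqr.symm)
  have hpr : φ p ≠ φ r := fun e => nur (e ▸ hup)
  simp only [h.adj_iff, ← huv, hu, hv, hp, hq, hr, huq, hur, hpr, nuq, nur, npr, false_and,
    or_self] at this

theorem isExpansionOf {n : ℕ} {H : SimpleGraph (Fin n)} {U : Set (Fin n)} {φ : V → Fin n}
    (h : IsExpansionOn G S H φ) (hZ2 : ¬ ContainsInduced G (Zgraph 2))
    (hU : ∀ i ∉ U, ∃ p q r, IsInducedP4 H i p q r) : IsExpansionOf (G.induce S) H U := by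
  refine ⟨fun x => φ x, fun i => ?_, fun i hi u v hu hv => ?_, fun u v => ?_⟩
  · obtain ⟨x, hx, rfl⟩ := h.exists_mem i
    exact ⟨⟨x, hx⟩, rfl⟩
  · subst hu
    exact Subtype.ext (h.eq_of_label_eq hZ2 u.2 v.2 hv.symm (hU _ hi))
  · simpa only [ne_eq, Subtype.ext_iff, comap_adj, Function.Embedding.subtype_apply] using
      h.adj_iff u.2 v.2

open Classical in
theorem union_singleton (h : IsExpansionOn G S H φ) (ha : a ∉ S) {A : Finset W}
    (hA : ∀ x ∈ S, G.Adj a x ↔ φ x ∈ A) (ρ : H ↪g H') (k : W')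
    (hk : ∀ j, j = k ∨ ∃ i, ρ i = j) (hAk : ∀ i, i ∈ A ↔ k = ρ i ∨ H'.Adj k (ρ i)) :
    IsExpansionOn G (S ∪ {a}) H' (Function.update (ρ ∘ φ) a k) := by
  have hne {x : V} (hx : x ∈ S) : x ≠ a := ne_of_mem_of_not_mem hx ha
  have hval {x : V} (hx : x ∈ S) : Function.update (ρ ∘ φ) a k x = ρ (φ x) :=
    Function.update_of_ne (hne hx) _ _
  refine ⟨fun j => ?_, ?_⟩
  · rcases hk j with rfl | ⟨i, rfl⟩
    · exact ⟨a, by simp, by simp⟩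
    · obtain ⟨x, hx, rfl⟩ := h.exists_mem i
      exact ⟨x, Or.inl hx, hval hx⟩
  · rintro u v (hu | rfl) (hv | rfl)
    · simp [hval hu, hval hv, h.adj_iff hu hv]
    · rw [G.adj_comm, hA u hu, hAk, hval hu, Function.update_self, H'.adj_comm]
      simp [hne hu, eq_comm]
    · simp [hval hv, (hne hv).symm, hA v hv, hAk]
    · simp

theorem isExpansionOf_union_singleton {n : ℕ} {H' : SimpleGraph (Fin n)} {U : Set (Fin n)}
    (h : IsExpansionOn G S H φ) (hZ2 : ¬ ContainsInduced G (Zgraph 2)) (ha : a ∉ S)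
    {A : Finset W} (hA : ∀ x ∈ S, G.Adj a x ↔ φ x ∈ A) (ρ : H ↪g H') (k : Fin n)
    (hk : ∀ j, j = k ∨ ∃ i, ρ i = j) (hAk : ∀ i, i ∈ A ↔ k = ρ i ∨ H'.Adj k (ρ i))
    (hU : ∀ i ∉ U, ∃ p q r, IsInducedP4 H' i p q r) :
    IsExpansionOf (G.induce (S ∪ {a})) H' U ∧
      ∀ i, ρ i ∉ U → {x ∈ S | φ x = i}.Subsingleton := by
  classical
  have h' := h.union_singleton ha hA ρ k hk hAk
  refine ⟨h'.isExpansionOf hZ2 hU, ?_⟩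
  rintro _ hi u ⟨hu, rfl⟩ v ⟨hv, huv⟩
  have hval {x : V} (hx : x ∈ S) : Function.update (ρ ∘ φ) a k x = ρ (φ x) :=
    Function.update_of_ne (ne_of_mem_of_not_mem hx ha) _ _
  refine h'.eq_of_label_eq hZ2 (Or.inl hu) (Or.inl hv) ?_ ?_
  · rw [hval hu, hval hv, huv]
  · rw [hval hu]
    exact hU _ hi

theorem exists_attachment (h : IsExpansionOn G S H φ) {𝒜 : Set (Finset W)}
    (h𝒜 : ∀ f : H ↪g G, (∀ i, f i ∈ S) → ∃ A ∈ 𝒜, ∀ i, G.Adj a (f i) ↔ i ∈ A)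
    (hsep : ∀ A ∈ 𝒜, ∀ B ∈ 𝒜, ∀ i, (∀ j ≠ i, j ∈ A ↔ j ∈ B) → A = B) :
    ∃ A ∈ 𝒜, ∀ v ∈ S, G.Adj a v ↔ φ v ∈ A := by
  classical
  choose x hxS hx using h.exists_mem
  obtain ⟨A, hA, hxA⟩ := h𝒜 (h.transversal x fun i => ⟨hxS i, hx i⟩) hxS
  refine ⟨A, hA, fun v hv => ?_⟩
  have hy (i : W) : Function.update x (φ v) v i ∈ S ∧ φ (Function.update x (φ v) v i) = i := by
    rcases eq_or_ne i (φ v) with rfl | hi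
    · simpa using hv
    · simpa [hi] using ⟨hxS i, hx i⟩
  -- Taking `v` to represent its clique changes the attachment set in at most the label of `v`.
  obtain ⟨B, hB, hyB⟩ := h𝒜 (h.transversal _ hy) fun i => (hy i).1
  have hAB : A = B := hsep A hA B hB (φ v) fun j hj => by
    rw [← hxA j, ← hyB j]
    simp [hj]
  rw [hAB, ← hyB (φ v)]
  simp

end IsExpansionOn

theorem nonempty_iso_of_isExpansionOf_empty {V : Type*} {G : SimpleGraph V} {n : ℕ}
    {H : SimpleGraph (Fin n)} (h : IsExpansionOf G H ∅) : Nonempty (G ≃g H) := by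
  obtain ⟨g, hsurj, hfib, hadj⟩ := h
  have hinj : Function.Injective g := fun u v huv => hfib (g v) (Set.notMem_empty _) u v huv rfl
  refine ⟨⟨Equiv.ofBijective g ⟨hinj, hsurj⟩, fun {u v} => ?_⟩⟩
  change H.Adj (g u) (g v) ↔ G.Adj u v
  rw [hadj, or_iff_right fun huv => huv.2 (hinj huv.1)]

section AttachmentCases

/-- The automorphism of `H₂` exchanging `t₃` with `t₄` and `t₅` with `t₆`. -/
def h2Swap : HGraph2 ≃g HGraph2 where
  toEquiv := Equiv.swap 2 3 * Equiv.swap 4 5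
  map_rel_iff' {i j} := by revert i j; decide

/-- `H₂` as `H₅ - w₅`, with `t₁, …, t₆` sent to `w₁, w₃, w₇, w₄, w₆, w₂`. -/
def h2ToH5 : HGraph2 ↪g HGraph5 where
  toFun := ![0, 2, 6, 3, 5, 1]
  inj' := by decide
  map_rel_iff' {i j} := by revert i j; decide

/-- `H₂` as `H₆ - x₆`, with `t₁, …, t₆` sent to `x₇, x₅, x₁, x₃, x₂, x₄`. -/
def h2ToH6 : HGraph2 ↪g HGraph6 where
  toFun := ![6, 4, 0, 2, 1, 3]
  inj' := by decide
  map_rel_iff' {i j} := by revert i j; decide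

variable {V : Type*} {G : SimpleGraph V} {S : Set V} {φ : V → Fin 6} {a : V}

theorem exists_isInducedP4_hGraph2 : ∀ i ∉ ({2, 3} : Set (Fin 6)),
    ∃ p q r, IsInducedP4 HGraph2 i p q r := by
  simp only [Set.mem_insert_iff, Set.mem_singleton_iff]
  decide

theorem exists_isInducedP4_hGraph5 : ∀ i ∉ ({6} : Set (Fin 7)),
    ∃ p q r, IsInducedP4 HGraph5 i p q r := by
  simp only [Set.mem_singleton_iff]
  decide

theorem exists_isInducedP4_hGraph6 : ∀ i ∉ (∅ : Set (Fin 7)),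
    ∃ p q r, IsInducedP4 HGraph6 i p q r := by
  simp only [Set.mem_empty_iff_false]
  decide

theorem IsExpansionOn.attachment_cases (hK13 : ¬ ContainsInduced G K13)
    (hZ2 : ¬ ContainsInduced G (Zgraph 2)) (h : IsExpansionOn G S HGraph2 φ) (ha : a ∉ S)
    (hnbr : ∃ b ∈ S, G.Adj a b) :
    IsExpansionOf (G.induce (S ∪ {a})) HGraph2 {2, 3} ∨
    ((∀ x ∈ S, G.Adj a x ↔ φ x = 0 ∨ φ x = 4 ∨ φ x = 2) ∧ {x ∈ S | φ x = 3}.Subsingleton ∧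
      IsExpansionOf (G.induce (S ∪ {a})) HGraph5 {6}) ∨
    ((∀ x ∈ S, G.Adj a x ↔ φ x = 0 ∨ φ x = 5 ∨ φ x = 3) ∧ {x ∈ S | φ x = 2}.Subsingleton ∧
      IsExpansionOf (G.induce (S ∪ {a})) HGraph5 {6}) ∨
    ((∀ x ∈ S, G.Adj a x ↔ φ x = 0 ∨ φ x = 1 ∨ φ x = 4 ∨ φ x = 5) ∧
      {x ∈ S | φ x = 2}.Subsingleton ∧ {x ∈ S | φ x = 3}.Subsingleton ∧
      Nonempty (G.induce (S ∪ {a}) ≃g HGraph6)) := by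
  have hrange (f : HGraph2 ↪g G) (hf : ∀ i, f i ∈ S) : a ∉ Set.range f := by
    rintro ⟨i, rfl⟩
    exact ha (hf i)
  obtain ⟨A, hA, haA⟩ := h.exists_attachment (𝒜 := h2Attachments)
    (fun f hf => exists_h2Attachment hK13 hZ2 f (hrange f hf)) eq_of_mem_h2Attachments
  simp only [h2Attachments, Finset.coe_insert, Finset.coe_singleton, Set.mem_insert_iff,
    Set.mem_singleton_iff] at hA
  rcases hA with rfl | rfl | rfl | rfl | rfl | rfl
  · obtain ⟨b, hb, hab⟩ := hnbr
    simp [haA b hb] at hab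
  · exact Or.inl (h.isExpansionOf_union_singleton hZ2 ha haA Embedding.refl 2 (by decide)
      (by decide) exists_isInducedP4_hGraph2).1
  · exact Or.inl (h.isExpansionOf_union_singleton hZ2 ha haA Embedding.refl 3 (by decide)
      (by decide) exists_isInducedP4_hGraph2).1
  · obtain ⟨hexp, hfib⟩ := h.isExpansionOf_union_singleton hZ2 ha haA h2ToH5 4 (by decide)
      (by decide) exists_isInducedP4_hGraph5
    refine Or.inr (Or.inl ⟨fun x hx => ?_, hfib 3 ?_, hexp⟩)
    · simp [haA x hx, or_comm]
    · simp only [Set.mem_singleton_iff]; decide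
  · obtain ⟨hexp, hfib⟩ := h.isExpansionOf_union_singleton hZ2 ha haA
      (h2ToH5.comp h2Swap.toEmbedding) 4 (by decide) (by decide) exists_isInducedP4_hGraph5
    refine Or.inr (Or.inr (Or.inl ⟨fun x hx => ?_, hfib 2 ?_, hexp⟩))
    · simp [haA x hx, or_comm]
    · simp only [Set.mem_singleton_iff]; decide
  · obtain ⟨hexp, hfib⟩ := h.isExpansionOf_union_singleton hZ2 ha haA h2ToH6 5 (by decide)
      (by decide) exists_isInducedP4_hGraph6
    refine Or.inr (Or.inr (Or.inr ⟨fun x hx => ?_, hfib 2 (Set.notMem_empty _),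
      hfib 3 (Set.notMem_empty _), nonempty_iso_of_isExpansionOf_empty hexp⟩))
    simp [haA x hx]

end AttachmentCases

/-- The induced subgraph `G[S]` is the expansion `H₂({D₃, D₄})`, with `D₃`, `D₄` the cliques
`C_{t₃}`, `C_{t₄}` and `t₁, t₂, t₅, t₆` the remaining single vertices. -/
structure IsH2Expansion {V : Type*} (G : SimpleGraph V) (S : Set V) (t1 t2 t5 t6 : V)
    (D3 D4 : Set V) : Prop where
  eq_union : S = {t1, t2, t5, t6} ∪ D3 ∪ D4
  pairwise_ne : List.Pairwise (· ≠ ·) [t1, t2, t5, t6]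
  nonempty_D3 : D3.Nonempty
  nonempty_D4 : D4.Nonempty
  disjoint : Disjoint D3 D4
  t1_notMem : t1 ∉ D3 ∪ D4
  t2_notMem : t2 ∉ D3 ∪ D4
  t5_notMem : t5 ∉ D3 ∪ D4
  t6_notMem : t6 ∉ D3 ∪ D4
  adj_iff : ∀ u ∈ S, ∀ v ∈ S, u ≠ v →
    (G.Adj u v ↔
      (u = t1 ∧ v = t2) ∨ (v = t1 ∧ u = t2) ∨
      (u = t2 ∧ v ∈ D3) ∨ (v = t2 ∧ u ∈ D3) ∨
      (u = t2 ∧ v ∈ D4) ∨ (v = t2 ∧ u ∈ D4) ∨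
      (u ∈ D3 ∧ v ∈ D3) ∨ (u ∈ D4 ∧ v ∈ D4) ∨
      (u ∈ D3 ∧ v ∈ D4) ∨ (u ∈ D4 ∧ v ∈ D3) ∨
      (u ∈ D3 ∧ v = t5) ∨ (v ∈ D3 ∧ u = t5) ∨
      (u ∈ D4 ∧ v = t6) ∨ (v ∈ D4 ∧ u = t6) ∨
      (u = t5 ∧ v = t6) ∨ (v = t5 ∧ u = t6))

/-- The vertex sets `{t₁}, {t₂}, D₃, D₄, {t₅}, {t₆}` replacing the vertices of `H₂` in the
expansion `H₂({D₃, D₄})`. -/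
def h2Parts {V : Type*} (t1 t2 t5 t6 : V) (D3 D4 : Set V) : Fin 6 → Set V :=
  ![{t1}, {t2}, D3, D4, {t5}, {t6}]

theorem exists_label_of_pairwise_disjoint {V ι : Type*} [Nonempty ι] {P : ι → Set V}
    (hP : Pairwise fun i j => Disjoint (P i) (P j)) :
    ∃ φ : V → ι, ∀ x ∈ ⋃ i, P i, ∀ i, φ x = i ↔ x ∈ P i := by
  refine ⟨fun x => Classical.epsilon fun i => x ∈ P i, fun x hx i => ?_⟩
  have hmem := Classical.epsilon_spec (Set.mem_iUnion.1 hx)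
  refine ⟨fun h => h ▸ hmem, fun hi => ?_⟩
  by_contra hne
  exact Set.disjoint_left.1 (hP hne) hmem hi

namespace IsH2Expansion

variable {V : Type*} {G : SimpleGraph V} {S : Set V} {t1 t2 t5 t6 : V} {D3 D4 : Set V}

theorem iUnion_h2Parts (h : IsH2Expansion G S t1 t2 t5 t6 D3 D4) :
    ⋃ i, h2Parts t1 t2 t5 t6 D3 D4 i = S := by
  ext x
  simp only [h2Parts, Set.mem_iUnion, Fin.exists_fin_succ, Fin.isValue, Matrix.cons_val_zero,
    Set.mem_singleton_iff, Matrix.cons_val_succ, Matrix.cons_val_fin_one, exists_const,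
    h.eq_union, Set.mem_union, Set.mem_insert_iff]
  tauto

theorem h2Parts_subset (h : IsH2Expansion G S t1 t2 t5 t6 D3 D4) (i : Fin 6) :
    h2Parts t1 t2 t5 t6 D3 D4 i ⊆ S :=
  (Set.subset_iUnion _ i).trans_eq h.iUnion_h2Parts

theorem nonempty_h2Parts (h : IsH2Expansion G S t1 t2 t5 t6 D3 D4) (i : Fin 6) :
    (h2Parts t1 t2 t5 t6 D3 D4 i).Nonempty := by
  fin_cases i <;> simp [h2Parts, h.nonempty_D3, h.nonempty_D4]

theorem pairwise_disjoint_h2Parts (h : IsH2Expansion G S t1 t2 t5 t6 D3 D4) :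
    Pairwise fun i j => Disjoint (h2Parts t1 t2 t5 t6 D3 D4 i) (h2Parts t1 t2 t5 t6 D3 D4 j) := by
  have hts := h.pairwise_ne
  have h1 := h.t1_notMem
  have h2 := h.t2_notMem
  have h5 := h.t5_notMem
  have h6 := h.t6_notMem
  simp only [List.pairwise_cons, List.mem_cons, List.not_mem_nil, or_false, forall_eq_or_imp,
    forall_eq] at hts
  simp only [Set.mem_union, not_or] at h1 h2 h5 h6
  intro i j hij
  fin_cases i <;> fin_cases j <;> simp_all [h2Parts, h.disjoint, h.disjoint.symm, eq_comm]

theorem exists_isExpansionOn (h : IsH2Expansion G S t1 t2 t5 t6 D3 D4) :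
    ∃ φ : V → Fin 6, IsExpansionOn G S HGraph2 φ ∧
      ∀ x ∈ S, ∀ i, φ x = i ↔ x ∈ h2Parts t1 t2 t5 t6 D3 D4 i := by
  obtain ⟨φ, hφ⟩ := exists_label_of_pairwise_disjoint h.pairwise_disjoint_h2Parts
  rw [h.iUnion_h2Parts] at hφ
  refine ⟨φ, ⟨fun i => ?_, fun {u v} hu hv => ?_⟩, hφ⟩
  · obtain ⟨x, hx⟩ := h.nonempty_h2Parts i
    have hxS : x ∈ S := h.h2Parts_subset i hx
    exact ⟨x, hxS, (hφ x hxS i).2 hx⟩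
  · rcases eq_or_ne u v with rfl | huv
    · simp
    have hlabel (x : V) (hx : x ∈ S) : (x = t1 ↔ φ x = 0) ∧ (x = t2 ↔ φ x = 1) ∧
        (x ∈ D3 ↔ φ x = 2) ∧ (x ∈ D4 ↔ φ x = 3) ∧ (x = t5 ↔ φ x = 4) ∧ (x = t6 ↔ φ x = 5) :=
      ⟨(hφ x hx 0).symm, (hφ x hx 1).symm, (hφ x hx 2).symm, (hφ x hx 3).symm,
        (hφ x hx 4).symm, (hφ x hx 5).symm⟩
    have hclique : φ u = φ v → φ u = 2 ∨ φ u = 3 := by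
      grind
    rw [h.adj_iff u hu v hv huv, and_iff_left huv]
    simp only [hlabel u hu, hlabel v hv]
    clear hlabel hφ
    generalize φ u = i at *
    generalize φ v = j at *
    revert i j
    decide

end IsH2Expansion

theorem stmt6_general {V : Type*} {G : SimpleGraph V} (hK13 : ¬ ContainsInduced G K13)
    (hZ2 : ¬ ContainsInduced G (Zgraph 2)) {S : Set V} {t1 t2 t5 t6 : V} {D3 D4 : Set V}
    (h : IsH2Expansion G S t1 t2 t5 t6 D3 D4) {a : V} (ha : a ∉ S) (hnbr : ∃ b ∈ S, G.Adj a b) :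
    IsExpansionOf (G.induce (S ∪ {a})) HGraph2 {2, 3} ∨
    ((∀ x ∈ S, G.Adj a x ↔ (x = t1 ∨ x = t5 ∨ x ∈ D3)) ∧ (∃ c, D4 = {c}) ∧
      IsExpansionOf (G.induce (S ∪ {a})) HGraph5 {6}) ∨
    ((∀ x ∈ S, G.Adj a x ↔ (x = t1 ∨ x = t6 ∨ x ∈ D4)) ∧ (∃ c, D3 = {c}) ∧
      IsExpansionOf (G.induce (S ∪ {a})) HGraph5 {6}) ∨
    ((∀ x ∈ S, G.Adj a x ↔ (x = t1 ∨ x = t2 ∨ x = t5 ∨ x = t6)) ∧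
      (∃ c, D3 = {c}) ∧ (∃ c, D4 = {c}) ∧ Nonempty (G.induce (S ∪ {a}) ≃g HGraph6)) := by
  obtain ⟨φ, hexp, hφ⟩ := h.exists_isExpansionOn
  have hsingleton (i : Fin 6) (hi : {x ∈ S | φ x = i}.Subsingleton) :
      ∃ c, h2Parts t1 t2 t5 t6 D3 D4 i = {c} := by
    refine Set.exists_eq_singleton_iff_nonempty_subsingleton.2
      ⟨h.nonempty_h2Parts i, hi.anti fun x hx => ?_⟩
    have hxS : x ∈ S := h.h2Parts_subset i hx
    exact ⟨hxS, (hφ x hxS i).2 hx⟩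
  rcases hexp.attachment_cases hK13 hZ2 ha hnbr with
    hi | ⟨hN, hs, hH⟩ | ⟨hN, hs, hH⟩ | ⟨hN, hs3, hs4, hH⟩
  · exact Or.inl hi
  · refine Or.inr (Or.inl ⟨fun x hx => ?_, hsingleton 3 hs, hH⟩)
    simp only [hN x hx, hφ x hx]
    rfl
  · refine Or.inr (Or.inr (Or.inl ⟨fun x hx => ?_, hsingleton 2 hs, hH⟩))
    simp only [hN x hx, hφ x hx]
    rfl
  · refine Or.inr (Or.inr (Or.inr ⟨fun x hx => ?_, hsingleton 2 hs3, hsingleton 3 hs4, hH⟩))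
    simp only [hN x hx, hφ x hx]
    rfl

/-- **Lemma 2.3 (Statement 6).** Let `G` be a connected `{K_{1,3}, Z₂, N}`-free graph
containing an induced subgraph `H = H₂({C_{t₃}, C_{t₄}})`, where `D3, D4` are
vertex-disjoint nonempty cliques playing the roles of `C_{t₃}, C_{t₄}` (here
`V(H) = {t₁, t₂, t₅, t₆} ∪ D3 ∪ D4`, with the adjacency of the expansion of `H₂`).
Then for each vertex `a ∈ V(G) − V(H)` with `N_G(a) ∩ V(H) ≠ ∅` one of the conclusions
(i)–(iii) holds. -/
theorem stmt6 {V : Type*} [Fintype V] (G : SimpleGraph V) (hconn : G.Connected)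
    (hK13 : ¬ ContainsInduced G K13) (hZ2 : ¬ ContainsInduced G (Zgraph 2))
    (hN : ¬ ContainsInduced G Ngraph)
    (t1 t2 t5 t6 : V) (D3 D4 : Set V)
    (hts : List.Pairwise (· ≠ ·) [t1, t2, t5, t6])
    (hne3 : D3.Nonempty) (hne4 : D4.Nonempty) (hd34 : Disjoint D3 D4)
    (ht1 : t1 ∉ D3 ∪ D4) (ht2 : t2 ∉ D3 ∪ D4) (ht5 : t5 ∉ D3 ∪ D4) (ht6 : t6 ∉ D3 ∪ D4)
    (hind : ∀ u ∈ ({t1, t2, t5, t6} ∪ D3 ∪ D4 : Set V),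
      ∀ v ∈ ({t1, t2, t5, t6} ∪ D3 ∪ D4 : Set V), u ≠ v →
      (G.Adj u v ↔
        (u = t1 ∧ v = t2) ∨ (v = t1 ∧ u = t2) ∨
        (u = t2 ∧ v ∈ D3) ∨ (v = t2 ∧ u ∈ D3) ∨
        (u = t2 ∧ v ∈ D4) ∨ (v = t2 ∧ u ∈ D4) ∨
        (u ∈ D3 ∧ v ∈ D3) ∨ (u ∈ D4 ∧ v ∈ D4) ∨
        (u ∈ D3 ∧ v ∈ D4) ∨ (u ∈ D4 ∧ v ∈ D3) ∨
        (u ∈ D3 ∧ v = t5) ∨ (v ∈ D3 ∧ u = t5) ∨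
        (u ∈ D4 ∧ v = t6) ∨ (v ∈ D4 ∧ u = t6) ∨
        (u = t5 ∧ v = t6) ∨ (v = t5 ∧ u = t6)))
    (a : V) (ha : a ∉ ({t1, t2, t5, t6} ∪ D3 ∪ D4 : Set V))
    (hnbr : ∃ b ∈ ({t1, t2, t5, t6} ∪ D3 ∪ D4 : Set V), G.Adj a b) :
    -- (i)
    IsExpansionOf (G.induce (({t1, t2, t5, t6} ∪ D3 ∪ D4 : Set V) ∪ {a})) HGraph2 {2, 3} ∨
    -- (ii), i = 3
    ((∀ x ∈ ({t1, t2, t5, t6} ∪ D3 ∪ D4 : Set V), G.Adj a x ↔ (x = t1 ∨ x = t5 ∨ x ∈ D3)) ∧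
      (∃ c, D4 = {c}) ∧
      IsExpansionOf (G.induce (({t1, t2, t5, t6} ∪ D3 ∪ D4 : Set V) ∪ {a})) HGraph5 {6}) ∨
    -- (ii), i = 4
    ((∀ x ∈ ({t1, t2, t5, t6} ∪ D3 ∪ D4 : Set V), G.Adj a x ↔ (x = t1 ∨ x = t6 ∨ x ∈ D4)) ∧
      (∃ c, D3 = {c}) ∧
      IsExpansionOf (G.induce (({t1, t2, t5, t6} ∪ D3 ∪ D4 : Set V) ∪ {a})) HGraph5 {6}) ∨
    -- (iii)
    ((∀ x ∈ ({t1, t2, t5, t6} ∪ D3 ∪ D4 : Set V),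
        G.Adj a x ↔ (x = t1 ∨ x = t2 ∨ x = t5 ∨ x = t6)) ∧
      (∃ c, D3 = {c}) ∧ (∃ c, D4 = {c}) ∧
      Nonempty ((G.induce (({t1, t2, t5, t6} ∪ D3 ∪ D4 : Set V) ∪ {a})) ≃g HGraph6)) := by
  exact stmt6_general hK13 hZ2
    ⟨rfl, hts, hne3, hne4, hd34, ht1, ht2, ht5, ht6, hind⟩ ha hnbr
end

section
/- Let G be a connected {K_{1,3}, Z_2, N}-free graph which contains as an induced subgraph a graph H = H_5({C_{w_7}}), where C_{w_7} is a nonempty clique. Then for each vertex a ∈ V(G) − V(H) with N_G(a) ∩ V(H) ≠ ∅, one of the following holds: (i) G[V(H) ∪ {a}] ∈ ℋ_5; or (ii) N_G(a) ∩ V(H) = {w_1, w_2, w_i, w_{9−i}} for some i ∈ {3,4} and |C_{w_7}| = 1 (and then G[V(H) ∪ {a}] ≅ H_7). -/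
open SimpleGraph

/-!
For an induced copy of `H₅` in `G` and a vertex `a` outside it, claw-freeness and `Z₂`-freeness
leave only three possible nonempty neighbourhoods of `a` in the copy: `{w₃, w₄, w₅, w₆, w₇}`,
`{w₁, w₂, w₃, w₆}` and `{w₁, w₂, w₄, w₅}`. Two copies inside `H₅({C})` differ only in the vertex of
`C` that plays the role of `w₇`, and whether `a` is adjacent to that vertex can be read off from
the other six. Hence `a` treats all vertices of `C` alike.

In the first case `a` is a further vertex of the clique `C`. In the second case two vertices of `C`
would form an induced `Z₂` with the path `w₅ w₁ a`, so `C` is a single vertex and `a` completes the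
copy of `H₅` to an `H₇`. The third case is the second one up to an automorphism of `H₅`.
-/

section

variable {V ι κ : Type*} {G : SimpleGraph V}

theorem exists_embedding_coe_eq [LinearOrder ι] {H : SimpleGraph ι} {f : ι → V}
    (hf : Function.Injective f) (hadj : ∀ i j, i < j → (G.Adj (f i) (f j) ↔ H.Adj i j)) :
    ∃ e : H ↪g G, ⇑e = f := by
  refine ⟨⟨⟨f, hf⟩, fun {i j} ↦ ?_⟩, rfl⟩
  rcases lt_trichotomy i j with hij | rfl | hij
  · exact hadj i j hij
  · simp
  · rw [G.adj_comm, H.adj_comm]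
    exact hadj j i hij

theorem adj_of_claw_free (hG : ¬ ContainsInduced G K13) {c x y z : V}
    (hx : G.Adj c x) (hy : G.Adj c y) (hz : G.Adj c z) (hxy : x ≠ y) (hxz : x ≠ z) (hyz : y ≠ z) :
    G.Adj x y ∨ G.Adj x z ∨ G.Adj y z := by
  by_contra! hnadj
  obtain ⟨e, -⟩ : ∃ e : K13 ↪g G, ⇑e = ![c, x, y, z] := by
    apply exists_embedding_coe_eq
    · simp [Function.Injective, Fin.forall_fin_succ, hx.ne, hx.ne', hy.ne, hy.ne', hz.ne, hz.ne',
        hxy, hxy.symm, hxz, hxz.symm, hyz, hyz.symm]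
    · simp [Fin.forall_fin_succ, K13, graphOfList, hx, hy, hz, hnadj]
  exact hG ⟨e⟩

theorem adj_of_Z2_free_s9 (hG : ¬ ContainsInduced G (Zgraph 2)) {p q r s t : V}
    (hpq : G.Adj p q) (hpr : G.Adj p r) (hqr : G.Adj q r) (hrs : G.Adj r s) (hst : G.Adj s t) :
    G.Adj p s ∨ G.Adj p t ∨ G.Adj q s ∨ G.Adj q t ∨ G.Adj r t := by
  by_contra! hnadj
  obtain ⟨nps, npt, nqs, nqt, nrt⟩ := hnadj
  have hps : p ≠ s := fun h ↦ npt (h ▸ hst)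
  have hpt : p ≠ t := fun h ↦ nps (h ▸ hst.symm)
  have hqs : q ≠ s := fun h ↦ nqt (h ▸ hst)
  have hqt : q ≠ t := fun h ↦ nqs (h ▸ hst.symm)
  have hrt : r ≠ t := fun h ↦ npt (h ▸ hpr)
  obtain ⟨e, -⟩ : ∃ e : Zgraph 2 ↪g G, ⇑e = ![p, q, r, s, t] := by
    apply exists_embedding_coe_eq
    · simp [Function.Injective, Fin.forall_fin_succ, hpq.ne, hpr.ne, hqr.ne, hrs.ne, hst.ne,
        hpq.ne', hpr.ne', hqr.ne', hrs.ne', hst.ne', hps, hpt, hqs, hqt, hrt,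
        hps.symm, hpt.symm, hqs.symm, hqt.symm, hrt.symm]
    · simp [Fin.forall_fin_succ, Zgraph, *]
  exact hG ⟨e⟩

/-- The constraints that claw-freeness and `Z₂`-freeness of an ambient graph impose on a set `T`
of vertices of `H`, if `T` consists of the neighbours, in an induced copy of `H`, of a vertex
outside that copy. The pattern of adjacencies in `H` is a single conjunction in each field, so
that it can be decided in one go when `H` is a concrete graph. -/
structure IsAdmissibleTrace (H : SimpleGraph ι) (T : Set ι) : Prop where
  mem_or_mem_of_center_mem : ∀ i j k, H.Adj i j ∧ H.Adj i k ∧ j ≠ k ∧ ¬ H.Adj j k →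
    i ∈ T → j ∈ T ∨ k ∈ T
  not_indep_triple : ∀ i j k, (i ≠ j ∧ i ≠ k ∧ j ≠ k) ∧ ¬ H.Adj i j ∧ ¬ H.Adj i k ∧ ¬ H.Adj j k →
    ¬ (i ∈ T ∧ j ∈ T ∧ k ∈ T)
  mem_or_mem_of_induced_path : ∀ i j k l,
    (H.Adj i j ∧ H.Adj j k ∧ H.Adj k l) ∧ ¬ H.Adj i k ∧ ¬ H.Adj i l ∧ ¬ H.Adj j l →
    i ∈ T → j ∈ T → k ∈ T ∨ l ∈ T

theorem isAdmissibleTrace_preimage_neighborSet (hK : ¬ ContainsInduced G K13)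
    (hZ : ¬ ContainsInduced G (Zgraph 2)) {H : SimpleGraph ι} (f : H ↪g G) {a : V}
    (ha : a ∉ Set.range f) : IsAdmissibleTrace H (f ⁻¹' G.neighborSet a) where
  mem_or_mem_of_center_mem := by
    rintro i j k ⟨hij, hik, hjk, nadj⟩ hi
    have hne : ∀ m, a ≠ f m := fun m h ↦ ha ⟨m, h.symm⟩
    simpa [nadj] using adj_of_claw_free hK (G.adj_symm hi) (f.map_adj_iff.2 hij)
      (f.map_adj_iff.2 hik) (hne j) (hne k) (f.injective.ne hjk)
  not_indep_triple := by
    rintro i j k ⟨⟨hij, hik, hjk⟩, nadj⟩ ⟨hi, hj, hk⟩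
    simpa [nadj] using adj_of_claw_free hK hi hj hk (f.injective.ne hij) (f.injective.ne hik)
      (f.injective.ne hjk)
  mem_or_mem_of_induced_path := by
    rintro i j k l ⟨⟨hij, hjk, hkl⟩, nadj⟩ hi hj
    simpa [nadj] using adj_of_Z2_free_s9 hZ hi hj (f.map_adj_iff.2 hij) (f.map_adj_iff.2 hjk)
      (f.map_adj_iff.2 hkl)

theorem IsAdmissibleTrace.preimage {H : SimpleGraph ι} {H' : SimpleGraph κ} {T : Set ι}
    (h : IsAdmissibleTrace H T) (e : H' ↪g H) : IsAdmissibleTrace H' (e ⁻¹' T) where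
  mem_or_mem_of_center_mem i j k hijk :=
    h.mem_or_mem_of_center_mem (e i) (e j) (e k) (by simpa using hijk)
  not_indep_triple i j k hijk :=
    h.not_indep_triple (e i) (e j) (e k) (by simpa using hijk)
  mem_or_mem_of_induced_path i j k l hijkl :=
    h.mem_or_mem_of_induced_path (e i) (e j) (e k) (e l) (by simpa using hijkl)

section H5

instance graphOfList.instDecidableRelAdj (n : ℕ) (E : List (Fin n × Fin n)) :
    DecidableRel (graphOfList n E).Adj :=
  inferInstanceAs (DecidableRel (SimpleGraph.fromRel _).Adj)

instance HGraph5.instDecidableRelAdj : DecidableRel HGraph5.Adj :=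
  graphOfList.instDecidableRelAdj _ _

instance HGraph7.instDecidableRelAdj : DecidableRel HGraph7.Adj :=
  graphOfList.instDecidableRelAdj _ _

/-- The automorphism of `H₅` exchanging `w₁` with `w₂`, `w₃` with `w₄` and `w₅` with `w₆`. -/
def HGraph5.swapEnds : HGraph5 ≃g HGraph5 where
  toEquiv := Equiv.swap 0 1 * Equiv.swap 2 3 * Equiv.swap 4 5
  map_rel_iff' {i j} := by revert i j; decide

/-- The automorphism of `H₅` exchanging `w₃` with `w₅` and `w₄` with `w₆`. -/
def HGraph5.swapSides : HGraph5 ≃g HGraph5 where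
  toEquiv := Equiv.swap 2 4 * Equiv.swap 3 5
  map_rel_iff' {i j} := by revert i j; decide

theorem HGraph5.swapSides_swapSides (i : Fin 7) : swapSides (swapSides i) = i := by
  revert i; decide

theorem HGraph5.swapSides_mem_iff (i : Fin 7) :
    swapSides i ∈ ({0, 1, 2, 5} : Set (Fin 7)) ↔ i ∈ ({0, 1, 3, 4} : Set (Fin 7)) := by
  simp only [Set.mem_insert_iff, Set.mem_singleton_iff]
  revert i; decide

namespace IsAdmissibleTrace

variable {T : Set (Fin 7)}

theorem mem_of_six_mem (h : IsAdmissibleTrace HGraph5 T) (h6 : 6 ∈ T) :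
    2 ∈ T ∧ 3 ∈ T ∨ 4 ∈ T ∧ 5 ∈ T := by
  have h24 := h.mem_or_mem_of_center_mem 6 2 4 (by decide) h6
  have h25 := h.mem_or_mem_of_center_mem 6 2 5 (by decide) h6
  have h34 := h.mem_or_mem_of_center_mem 6 3 4 (by decide) h6
  have h35 := h.mem_or_mem_of_center_mem 6 3 5 (by decide) h6
  tauto

theorem zero_notMem_of_six_mem (h : IsAdmissibleTrace HGraph5 T) (h6 : 6 ∈ T) : 0 ∉ T := by
  intro h0
  have h1 : 1 ∉ T := fun h1 ↦ h.not_indep_triple 0 1 6 (by decide) ⟨h0, h1, h6⟩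
  have h35 : ¬ (3 ∈ T ∧ 5 ∈ T) := fun ⟨h3, h5⟩ ↦
    h.not_indep_triple 0 3 5 (by decide) ⟨h0, h3, h5⟩
  rcases h.mem_of_six_mem h6 with ⟨h2, h3⟩ | ⟨h4, h5⟩
  · have h5 := (h.mem_or_mem_of_induced_path 2 3 1 5 (by decide) h2 h3).resolve_left h1
    exact h35 ⟨h3, h5⟩
  · have h3 := (h.mem_or_mem_of_induced_path 4 5 1 3 (by decide) h4 h5).resolve_left h1
    exact h35 ⟨h3, h5⟩

theorem eq_of_six_mem (h : IsAdmissibleTrace HGraph5 T) (h6 : 6 ∈ T) : T = {2, 3, 4, 5, 6} := by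
  have h0 : 0 ∉ T := h.zero_notMem_of_six_mem h6
  have h1 : 1 ∉ T := (h.preimage HGraph5.swapEnds.toEmbedding).zero_notMem_of_six_mem h6
  have h2345 : 2 ∈ T ∧ 3 ∈ T ∧ 4 ∈ T ∧ 5 ∈ T := by
    rcases h.mem_of_six_mem h6 with ⟨h2, h3⟩ | ⟨h4, h5⟩
    · have h4 := (h.mem_or_mem_of_induced_path 3 2 0 4 (by decide) h3 h2).resolve_left h0
      have h5 := (h.mem_or_mem_of_induced_path 2 3 1 5 (by decide) h2 h3).resolve_left h1
      exact ⟨h2, h3, h4, h5⟩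
    · have h2 := (h.mem_or_mem_of_induced_path 5 4 0 2 (by decide) h5 h4).resolve_left h0
      have h3 := (h.mem_or_mem_of_induced_path 4 5 1 3 (by decide) h4 h5).resolve_left h1
      exact ⟨h2, h3, h4, h5⟩
  ext i
  fin_cases i <;> simp [h0, h1, h2345, h6]

theorem eq_of_two_mem (h : IsAdmissibleTrace HGraph5 T) (h6 : 6 ∉ T) (h2 : 2 ∈ T) :
    T = {0, 1, 2, 5} := by
  have h0 : 0 ∈ T := (h.mem_or_mem_of_center_mem 2 0 6 (by decide) h2).resolve_right h6
  have h1 : 1 ∈ T := by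
    rcases h.mem_or_mem_of_induced_path 0 2 3 1 (by decide) h0 h2 with h3 | h1
    · exact (h.mem_or_mem_of_center_mem 3 1 6 (by decide) h3).resolve_right h6
    · exact h1
  have h5 : 5 ∈ T := (h.mem_or_mem_of_induced_path 0 2 6 5 (by decide) h0 h2).resolve_left h6
  have h3 : 3 ∉ T := fun h3 ↦ h.not_indep_triple 0 3 5 (by decide) ⟨h0, h3, h5⟩
  have h4 : 4 ∉ T := fun h4 ↦ h.not_indep_triple 1 2 4 (by decide) ⟨h1, h2, h4⟩
  ext i
  fin_cases i <;> simp [h0, h1, h2, h3, h4, h5, h6]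

theorem eq_of_four_mem (h : IsAdmissibleTrace HGraph5 T) (h6 : 6 ∉ T) (h4 : 4 ∈ T) :
    T = {0, 1, 3, 4} := by
  have hT := (h.preimage HGraph5.swapSides.toEmbedding).eq_of_two_mem h6 h4
  ext i
  rw [← HGraph5.swapSides_mem_iff, ← hT, Set.mem_preimage]
  exact iff_of_eq (congrArg (· ∈ T) (HGraph5.swapSides_swapSides i).symm)

theorem two_mem_or_four_mem (h : IsAdmissibleTrace HGraph5 T) (h6 : 6 ∉ T) (hT : T.Nonempty) :
    2 ∈ T ∨ 4 ∈ T := by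
  have h3 : 3 ∈ T → 4 ∈ T := fun h3 ↦
    have h1 := (h.mem_or_mem_of_center_mem 3 1 6 (by decide) h3).resolve_right h6
    (h.mem_or_mem_of_induced_path 1 3 6 4 (by decide) h1 h3).resolve_left h6
  have h5 : 5 ∈ T → 2 ∈ T := fun h5 ↦
    have h1 := (h.mem_or_mem_of_center_mem 5 1 6 (by decide) h5).resolve_right h6
    (h.mem_or_mem_of_induced_path 1 5 6 2 (by decide) h1 h5).resolve_left h6
  obtain ⟨i, hi⟩ := hT
  fin_cases i
  · exact h.mem_or_mem_of_center_mem 0 2 4 (by decide) hi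
  · exact (h.mem_or_mem_of_center_mem 1 3 5 (by decide) hi).symm.imp h5 h3
  · exact .inl hi
  · exact .inr (h3 hi)
  · exact .inr hi
  · exact .inl (h5 hi)
  · exact absurd hi h6

theorem eq_of_nonempty (h : IsAdmissibleTrace HGraph5 T) (hT : T.Nonempty) :
    T = {2, 3, 4, 5, 6} ∨ T = {0, 1, 2, 5} ∨ T = {0, 1, 3, 4} := by
  by_cases h6 : 6 ∈ T
  · exact .inl (h.eq_of_six_mem h6)
  · exact .inr ((h.two_mem_or_four_mem h6 hT).imp (h.eq_of_two_mem h6) (h.eq_of_four_mem h6))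

theorem six_mem_iff (h : IsAdmissibleTrace HGraph5 T) : 6 ∈ T ↔ 2 ∈ T ∧ 0 ∉ T := by
  rcases T.eq_empty_or_nonempty with rfl | hT
  · simp
  · rcases h.eq_of_nonempty hT with rfl | rfl | rfl <;> simp

end IsAdmissibleTrace

theorem exists_h7_embedding (f : HGraph5 ↪g G) {a : V} (ha : a ∉ Set.range f)
    (htrace : f ⁻¹' G.neighborSet a = {0, 1, 2, 5}) :
    ∃ e : HGraph7 ↪g G, Set.range e = insert a (Set.range f) := by
  have hne : ∀ i, a ≠ f i := fun i h ↦ ha ⟨i, h.symm⟩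
  have hadj : ∀ i, G.Adj a (f i) ↔ i = 0 ∨ i = 1 ∨ i = 2 ∨ i = 5 := Set.ext_iff.1 htrace
  obtain ⟨e, he⟩ : ∃ e : HGraph7 ↪g G, ⇑e = ![f 0, f 4, a, f 5, f 2, f 6, f 1, f 3] := by
    apply exists_embedding_coe_eq
    · simp [Function.Injective, Fin.forall_fin_succ, hne, (hne _).symm]
    · simp +decide [Fin.forall_fin_succ, hadj, G.adj_comm _ a]
  refine ⟨e, ?_⟩
  ext x
  simp only [he, Set.mem_range, Set.mem_insert_iff, Fin.exists_fin_succ, IsEmpty.exists_iff,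
    or_false, eq_comm (a := x), Matrix.cons_val_zero, Matrix.cons_val_succ, Fin.succ_zero_eq_one,
    Fin.succ_one_eq_two, Fin.reduceSucc]
  tauto

end H5

/-- `g` exhibits `G.induce S` as an expansion of `H` in which only the vertices in `U` are
expanded: its fibres over `S` are the expansion cliques. The values of `g` outside `S` are
irrelevant, and `IsExpansionOf` is the existence of such a `g` (see `isExpansionOf`). -/
structure IsExpansionMapOn (G : SimpleGraph V) (S : Set V) (H : SimpleGraph ι) (U : Set ι)
    (g : V → ι) : Prop where
  surjOn : Set.SurjOn g S Set.univ
  eq_of_notMem : ∀ u ∈ S, ∀ v ∈ S, g u = g v → g u ∉ U → u = v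
  adj_iff : ∀ u ∈ S, ∀ v ∈ S, G.Adj u v ↔ (g u = g v ∧ u ≠ v) ∨ H.Adj (g u) (g v)

namespace IsExpansionMapOn

variable {S : Set V} {H : SimpleGraph ι} {U : Set ι} {g : V → ι} {a : V}

theorem isExpansionOf {n : ℕ} {H : SimpleGraph (Fin n)} {U : Set (Fin n)} {g : V → Fin n}
    (h : IsExpansionMapOn G S H U g) : IsExpansionOf (G.induce S) H U := by
  refine ⟨fun x ↦ g x, fun i ↦ ?_, ?_, ?_⟩
  · obtain ⟨x, hx, hxi⟩ := h.surjOn (Set.mem_univ i)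
    exact ⟨⟨x, hx⟩, hxi⟩
  · rintro i hi u v rfl huv
    exact Subtype.ext (h.eq_of_notMem u u.2 v v.2 huv.symm hi)
  · intro u v
    simpa [Subtype.ext_iff] using h.adj_iff u u.2 v v.2

theorem exists_section (h : IsExpansionMapOn G S H U g) {x : V} (hx : x ∈ S) :
    ∃ f : H ↪g G, (∀ i, f i ∈ S ∧ g (f i) = i) ∧ f (g x) = x := by
  classical
  choose s hs using fun i ↦ h.surjOn (Set.mem_univ i)
  let f := Function.update s (g x) x
  have hf : ∀ i, f i ∈ S ∧ g (f i) = i := by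
    intro i
    rcases eq_or_ne i (g x) with rfl | hi
    · simpa [f] using hx
    · simpa [f, hi] using hs i
  have hadj : ∀ i j, G.Adj (f i) (f j) ↔ H.Adj i j := by
    intro i j
    have : ¬ (i = j ∧ f i ≠ f j) := fun hij ↦ hij.2 (congrArg f hij.1)
    simpa [(hf i).2, (hf j).2, this] using h.adj_iff _ (hf i).1 _ (hf j).1
  exact ⟨⟨⟨f, Function.LeftInverse.injective fun i ↦ (hf i).2⟩, hadj _ _⟩, hf, by simp [f]⟩

theorem insert_update [DecidableEq V] (h : IsExpansionMapOn G S H U g) (ha : a ∉ S) {i : ι}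
    (hi : i ∈ U) (hadj : ∀ x ∈ S, G.Adj a x ↔ g x = i ∨ H.Adj i (g x)) :
    IsExpansionMapOn G (insert a S) H U (Function.update g a i) := by
  have hne : ∀ x ∈ S, x ≠ a := fun x hx hxa ↦ ha (hxa ▸ hx)
  refine ⟨fun j _ ↦ ?_, ?_, ?_⟩
  · obtain ⟨x, hx, rfl⟩ := h.surjOn (Set.mem_univ j)
    exact ⟨x, .inr hx, Function.update_of_ne (hne x hx) _ _⟩
  · rintro u (rfl | hu) v (rfl | hv) huv hU
    · rfl
    · simp [hi] at hU
    · simp [hi, huv] at hU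
    · simp only [Function.update_of_ne (hne _ hu), Function.update_of_ne (hne _ hv)] at huv hU
      exact h.eq_of_notMem u hu v hv huv hU
  · rintro u (rfl | hu) v (rfl | hv)
    · simp
    · simp [hne v hv, (hne v hv).symm, hadj v hv, eq_comm]
    · simp [hne u hu, G.adj_comm u, H.adj_comm, hadj u hu]
    · simpa [hne u hu, hne v hv] using h.adj_iff u hu v hv

theorem comp_iso (h : IsExpansionMapOn G S H U g) {H' : SimpleGraph κ} (e : H ≃g H') :
    IsExpansionMapOn G S H' (e '' U) (e ∘ g) where
  surjOn := (Set.surjOn_univ.2 e.surjective).comp h.surjOn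
  eq_of_notMem u hu v hv huv hU := h.eq_of_notMem u hu v hv (e.injective huv) (by simpa using hU)
  adj_iff u hu v hv := by simpa [e.map_adj_iff] using h.adj_iff u hu v hv

section H5

variable {g : V → Fin 7}

theorem adj_iff_mem_of_h5 (h : IsExpansionMapOn G S HGraph5 {6} g) (hK : ¬ ContainsInduced G K13)
    (hZ : ¬ ContainsInduced G (Zgraph 2)) (ha : a ∉ S) (hnbr : ∃ b ∈ S, G.Adj a b) :
    ∃ T : Set (Fin 7), (T = {2, 3, 4, 5, 6} ∨ T = {0, 1, 2, 5} ∨ T = {0, 1, 3, 4}) ∧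
      ∀ x ∈ S, G.Adj a x ↔ g x ∈ T := by
  obtain ⟨b, hb, hab⟩ := hnbr
  have trace : ∀ f : HGraph5 ↪g G, (∀ i, f i ∈ S ∧ g (f i) = i) →
      IsAdmissibleTrace HGraph5 (f ⁻¹' G.neighborSet a) := fun f hf ↦
    isAdmissibleTrace_preimage_neighborSet hK hZ f (by rintro ⟨i, rfl⟩; exact ha (hf i).1)
  obtain ⟨f, hf, hfb⟩ := h.exists_section hb
  refine ⟨f ⁻¹' G.neighborSet a, (trace f hf).eq_of_nonempty ⟨g b, by simpa [hfb]⟩, ?_⟩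
  intro x hx
  obtain ⟨f', hf', hfx⟩ := h.exists_section hx
  have agree : ∀ i ≠ 6, f' i = f i := fun i hi ↦
    h.eq_of_notMem _ (hf' i).1 _ (hf i).1 ((hf' i).2.trans (hf i).2.symm) (by simpa [hf'] using hi)
  have mem_iff : ∀ i ≠ 6, i ∈ f' ⁻¹' G.neighborSet a ↔ i ∈ f ⁻¹' G.neighborSet a := fun i hi ↦ by
    rw [Set.mem_preimage, agree i hi, Set.mem_preimage]
  have hx' : G.Adj a x ↔ g x ∈ f' ⁻¹' G.neighborSet a := by simp [hfx]
  rw [hx']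
  rcases eq_or_ne (g x) 6 with h6 | h6
  · rw [h6, (trace f hf).six_mem_iff, (trace f' hf').six_mem_iff, mem_iff 2 (by decide),
      mem_iff 0 (by decide)]
  · exact mem_iff _ h6

theorem injOn_of_adj_iff (h : IsExpansionMapOn G S HGraph5 {6} g)
    (hZ : ¬ ContainsInduced G (Zgraph 2))
    (hadj : ∀ x ∈ S, G.Adj a x ↔ g x ∈ ({0, 1, 2, 5} : Set (Fin 7))) : Set.InjOn g S := by
  intro x hx y hy hxy
  by_contra hne
  have hx6 : g x = 6 := by
    by_contra hx6
    exact hne (h.eq_of_notMem x hx y hy hxy hx6)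
  have hy6 : g y = 6 := hxy ▸ hx6
  obtain ⟨u, hu, hu0⟩ := h.surjOn (Set.mem_univ 0)
  obtain ⟨v, hv, hv4⟩ := h.surjOn (Set.mem_univ 4)
  have hxv : G.Adj x v := (h.adj_iff x hx v hv).2 (.inr (by rw [hx6, hv4]; decide))
  have hyv : G.Adj y v := (h.adj_iff y hy v hv).2 (.inr (by rw [hy6, hv4]; decide))
  have hvu : G.Adj v u := (h.adj_iff v hv u hu).2 (.inr (by rw [hv4, hu0]; decide))
  have hua : G.Adj u a := ((hadj u hu).2 (by simp [hu0])).symm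
  have := adj_of_Z2_free_s9 hZ ((h.adj_iff x hx y hy).2 (.inl ⟨hxy, hne⟩)) hxv hyv hvu hua
  simp only [G.adj_comm _ a, hadj x hx, hadj y hy, hadj v hv, h.adj_iff x hx u hu,
    h.adj_iff y hy u hu, hx6, hy6, hv4, hu0] at this
  revert this
  simp [HGraph5, graphOfList]

theorem nonempty_iso_h7 (h : IsExpansionMapOn G S HGraph5 {6} g) (hinj : Set.InjOn g S)
    (ha : a ∉ S) (hadj : ∀ x ∈ S, G.Adj a x ↔ g x ∈ ({0, 1, 2, 5} : Set (Fin 7))) :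
    Nonempty (G.induce (insert a S) ≃g HGraph7) := by
  obtain ⟨x, hx, -⟩ := h.surjOn (Set.mem_univ 0)
  obtain ⟨f, hf, -⟩ := h.exists_section hx
  obtain rfl : S = Set.range f := by
    refine Set.Subset.antisymm (fun y hy ↦ ⟨g y, ?_⟩) (Set.range_subset_iff.2 fun i ↦ (hf i).1)
    exact hinj (hf _).1 hy (hf _).2
  obtain ⟨e, he⟩ := exists_h7_embedding f ha (by ext i; simpa [hf] using hadj _ (hf i).1)
  rw [← he]
  exact ⟨e.isoInduceRange.symm⟩

theorem injOn_and_nonempty_iso_h7 (h : IsExpansionMapOn G S HGraph5 {6} g)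
    (hZ : ¬ ContainsInduced G (Zgraph 2)) (ha : a ∉ S) {T : Set (Fin 7)}
    (hT : T = {0, 1, 2, 5} ∨ T = {0, 1, 3, 4}) (hadj : ∀ x ∈ S, G.Adj a x ↔ g x ∈ T) :
    Set.InjOn g S ∧ Nonempty (G.induce (insert a S) ≃g HGraph7) := by
  rcases hT with rfl | rfl
  · have hinj := h.injOn_of_adj_iff hZ hadj
    exact ⟨hinj, h.nonempty_iso_h7 hinj ha hadj⟩
  · have fix_six : HGraph5.swapSides '' {6} = {6} := Set.image_singleton
    have h' := fix_six ▸ h.comp_iso HGraph5.swapSides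
    have hadj' : ∀ x ∈ S, G.Adj a x ↔ (HGraph5.swapSides ∘ g) x ∈ ({0, 1, 2, 5} : Set (Fin 7)) :=
      fun x hx ↦ (hadj x hx).trans (HGraph5.swapSides_mem_iff _).symm
    have hinj := h'.injOn_of_adj_iff hZ hadj'
    exact ⟨hinj.of_comp, h'.nonempty_iso_h7 hinj ha hadj'⟩

theorem isExpansionOf_insert (h : IsExpansionMapOn G S HGraph5 {6} g) (ha : a ∉ S)
    (hadj : ∀ x ∈ S, G.Adj a x ↔ g x ∈ ({2, 3, 4, 5, 6} : Set (Fin 7))) :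
    IsExpansionOf (G.induce (insert a S)) HGraph5 {6} := by
  classical
  have closed_nbhd : ∀ i, i ∈ ({2, 3, 4, 5, 6} : Set (Fin 7)) ↔ i = 6 ∨ HGraph5.Adj 6 i := by
    simp only [Set.mem_insert_iff, Set.mem_singleton_iff]
    decide
  exact (h.insert_update ha rfl fun x hx ↦ (hadj x hx).trans (closed_nbhd _)).isExpansionOf

end H5

end IsExpansionMapOn

/-- `H₅({D})` is an induced subgraph of `G`, where `w₁, …, w₆` are its vertices outside the
clique `D` that replaces `w₇`. -/
structure IsInducedH5Expansion (G : SimpleGraph V) (w1 w2 w3 w4 w5 w6 : V) (D : Set V) : Prop where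
  pairwise_ne : List.Pairwise (· ≠ ·) [w1, w2, w3, w4, w5, w6]
  nonempty : D.Nonempty
  notMem : w1 ∉ D ∧ w2 ∉ D ∧ w3 ∉ D ∧ w4 ∉ D ∧ w5 ∉ D ∧ w6 ∉ D
  adj_iff : ∀ u ∈ ({w1, w2, w3, w4, w5, w6} ∪ D : Set V),
    ∀ v ∈ ({w1, w2, w3, w4, w5, w6} ∪ D : Set V), u ≠ v →
    (G.Adj u v ↔
      (u = w1 ∧ v = w3) ∨ (v = w1 ∧ u = w3) ∨
      (u = w3 ∧ v = w4) ∨ (v = w3 ∧ u = w4) ∨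
      (u = w4 ∧ v = w2) ∨ (v = w4 ∧ u = w2) ∨
      (u = w2 ∧ v = w6) ∨ (v = w2 ∧ u = w6) ∨
      (u = w6 ∧ v = w5) ∨ (v = w6 ∧ u = w5) ∨
      (u = w5 ∧ v = w1) ∨ (v = w5 ∧ u = w1) ∨
      (u = w3 ∧ v ∈ D) ∨ (v = w3 ∧ u ∈ D) ∨
      (u = w4 ∧ v ∈ D) ∨ (v = w4 ∧ u ∈ D) ∨
      (u = w5 ∧ v ∈ D) ∨ (v = w5 ∧ u ∈ D) ∨
      (u = w6 ∧ v ∈ D) ∨ (v = w6 ∧ u ∈ D) ∨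
      (u ∈ D ∧ v ∈ D))

open Classical in
/-- The expansion map of `H₅({D})`: it sends `wₖ` to `k - 1`, the vertex `wₖ` of `HGraph5`, and
all other vertices, in particular those of the clique `D`, to `6`, the vertex `w₇`. -/
noncomputable def h5Label (w1 w2 w3 w4 w5 w6 x : V) : Fin 7 :=
  if x = w1 then 0 else if x = w2 then 1 else if x = w3 then 2
  else if x = w4 then 3 else if x = w5 then 4 else if x = w6 then 5 else 6

theorem eq_of_h5Label_eq {w1 w2 w3 w4 w5 w6 u v : V}
    (huv : h5Label w1 w2 w3 w4 w5 w6 u = h5Label w1 w2 w3 w4 w5 w6 v)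
    (hu : h5Label w1 w2 w3 w4 w5 w6 u ≠ 6) : u = v := by
  unfold h5Label at huv hu
  split_ifs at huv hu <;> simp_all

namespace IsInducedH5Expansion

variable {w1 w2 w3 w4 w5 w6 x : V} {D : Set V}

theorem eq_iff_h5Label_eq (h : IsInducedH5Expansion G w1 w2 w3 w4 w5 w6 D) :
    (x = w1 ↔ h5Label w1 w2 w3 w4 w5 w6 x = 0) ∧ (x = w2 ↔ h5Label w1 w2 w3 w4 w5 w6 x = 1) ∧
    (x = w3 ↔ h5Label w1 w2 w3 w4 w5 w6 x = 2) ∧ (x = w4 ↔ h5Label w1 w2 w3 w4 w5 w6 x = 3) ∧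
    (x = w5 ↔ h5Label w1 w2 w3 w4 w5 w6 x = 4) ∧ (x = w6 ↔ h5Label w1 w2 w3 w4 w5 w6 x = 5) := by
  have hw := h.pairwise_ne
  simp only [List.pairwise_cons, List.mem_cons, List.not_mem_nil, or_false, forall_eq_or_imp,
    forall_eq] at hw
  unfold h5Label
  split_ifs <;> simp_all

theorem mem_iff_h5Label_eq (h : IsInducedH5Expansion G w1 w2 w3 w4 w5 w6 D)
    (hx : x ∈ ({w1, w2, w3, w4, w5, w6} ∪ D : Set V)) :
    x ∈ D ↔ h5Label w1 w2 w3 w4 w5 w6 x = 6 := by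
  obtain ⟨h1, h2, h3, h4, h5, h6⟩ := h.notMem
  simp only [Set.mem_union, Set.mem_insert_iff, Set.mem_singleton_iff] at hx
  unfold h5Label
  grind

theorem isExpansionMapOn (h : IsInducedH5Expansion G w1 w2 w3 w4 w5 w6 D) :
    IsExpansionMapOn G ({w1, w2, w3, w4, w5, w6} ∪ D) HGraph5 {6}
      (h5Label w1 w2 w3 w4 w5 w6) := by
  refine ⟨?_, fun u _ v _ huv hu ↦ eq_of_h5Label_eq huv hu, fun u hu v hv ↦ ?_⟩
  · intro i _
    obtain ⟨c, hc⟩ := h.nonempty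
    fin_cases i
    · exact ⟨w1, by simp, h.eq_iff_h5Label_eq.1.1 rfl⟩
    · exact ⟨w2, by simp, h.eq_iff_h5Label_eq.2.1.1 rfl⟩
    · exact ⟨w3, by simp, h.eq_iff_h5Label_eq.2.2.1.1 rfl⟩
    · exact ⟨w4, by simp, h.eq_iff_h5Label_eq.2.2.2.1.1 rfl⟩
    · exact ⟨w5, by simp, h.eq_iff_h5Label_eq.2.2.2.2.1.1 rfl⟩
    · exact ⟨w6, by simp, h.eq_iff_h5Label_eq.2.2.2.2.2.1 rfl⟩
    · exact ⟨c, .inr hc, (h.mem_iff_h5Label_eq (.inr hc)).1 hc⟩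
  · rcases eq_or_ne u v with rfl | huv
    · simp
    · obtain ⟨u1, u2, u3, u4, u5, u6⟩ := h.eq_iff_h5Label_eq (x := u)
      obtain ⟨v1, v2, v3, v4, v5, v6⟩ := h.eq_iff_h5Label_eq (x := v)
      have hfib : h5Label w1 w2 w3 w4 w5 w6 u = h5Label w1 w2 w3 w4 w5 w6 v →
          h5Label w1 w2 w3 w4 w5 w6 u = 6 := fun e ↦ not_imp_comm.1 (eq_of_h5Label_eq e) huv
      rw [h.adj_iff u hu v hv huv, h.mem_iff_h5Label_eq hu, h.mem_iff_h5Label_eq hv,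
        u1, u2, u3, u4, u5, u6, v1, v2, v3, v4, v5, v6]
      generalize h5Label w1 w2 w3 w4 w5 w6 u = i at *
      generalize h5Label w1 w2 w3 w4 w5 w6 v = j at *
      simp only [huv, ne_eq, not_false_eq_true, and_true]
      clear * - hfib
      revert i j
      decide

theorem exists_eq_singleton_of_injOn (h : IsInducedH5Expansion G w1 w2 w3 w4 w5 w6 D)
    (hinj : Set.InjOn (h5Label w1 w2 w3 w4 w5 w6) ({w1, w2, w3, w4, w5, w6} ∪ D)) :
    ∃ c, D = {c} := by
  refine Set.exists_eq_singleton_iff_nonempty_subsingleton.2 ⟨h.nonempty, fun x hx y hy ↦ ?_⟩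
  have hx6 := (h.mem_iff_h5Label_eq (.inr hx)).1 hx
  have hy6 := (h.mem_iff_h5Label_eq (.inr hy)).1 hy
  exact hinj (.inr hx) (.inr hy) (hx6.trans hy6.symm)

end IsInducedH5Expansion

end

theorem stmt9_general {V : Type*} (G : SimpleGraph V) (hK13 : ¬ ContainsInduced G K13)
    (hZ2 : ¬ ContainsInduced G (Zgraph 2)) (w1 w2 w3 w4 w5 w6 : V) (D7 : Set V)
    (h : IsInducedH5Expansion G w1 w2 w3 w4 w5 w6 D7)
    (a : V) (ha : a ∉ ({w1, w2, w3, w4, w5, w6} ∪ D7 : Set V))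
    (hnbr : ∃ b ∈ ({w1, w2, w3, w4, w5, w6} ∪ D7 : Set V), G.Adj a b) :
    IsExpansionOf (G.induce (({w1, w2, w3, w4, w5, w6} ∪ D7 : Set V) ∪ {a})) HGraph5 {6} ∨
    ((∀ x ∈ ({w1, w2, w3, w4, w5, w6} ∪ D7 : Set V),
        G.Adj a x ↔ (x = w1 ∨ x = w2 ∨ x = w3 ∨ x = w6)) ∧
      (∃ c, D7 = {c}) ∧
      Nonempty ((G.induce (({w1, w2, w3, w4, w5, w6} ∪ D7 : Set V) ∪ {a})) ≃g HGraph7)) ∨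
    ((∀ x ∈ ({w1, w2, w3, w4, w5, w6} ∪ D7 : Set V),
        G.Adj a x ↔ (x = w1 ∨ x = w2 ∨ x = w4 ∨ x = w5)) ∧
      (∃ c, D7 = {c}) ∧
      Nonempty ((G.induce (({w1, w2, w3, w4, w5, w6} ∪ D7 : Set V) ∪ {a})) ≃g HGraph7)) := by
  have hg := h.isExpansionMapOn
  rw [Set.union_singleton]
  obtain ⟨T, hT, hadj⟩ := hg.adj_iff_mem_of_h5 hK13 hZ2 ha hnbr
  rcases hT with rfl | hT
  · exact .inl (hg.isExpansionOf_insert ha hadj)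
  obtain ⟨hinj, hiso⟩ := hg.injOn_and_nonempty_iso_h7 hZ2 ha hT hadj
  have hD := h.exists_eq_singleton_of_injOn hinj
  refine .inr (hT.imp ?_ ?_) <;> rintro rfl <;> refine ⟨fun x hx ↦ (hadj x hx).trans ?_, hD, hiso⟩
  all_goals
    obtain ⟨h1, h2, h3, h4, h5, h6⟩ := h.eq_iff_h5Label_eq (x := x)
    simp only [Set.mem_insert_iff, Set.mem_singleton_iff, h1, h2, h3, h4, h5, h6]

/-- **Lemma 2.6 (Statement 9).** Let `G` be a connected `{K_{1,3}, Z₂, N}`-free graph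
containing an induced subgraph `H = H₅({C_{w₇}})`, where `D7` is a nonempty clique playing
the role of `C_{w₇}` (here `V(H) = {w₁,…,w₆} ∪ D7`; the adjacency of the expansion of `H₅`
consists of the 6-cycle `w₁w₃w₄w₂w₆w₅w₁` together with `D7` joined to `w₃, w₄, w₅, w₆`).
Then for each vertex `a ∈ V(G) − V(H)` with `N_G(a) ∩ V(H) ≠ ∅` one of (i), (ii) holds. -/
theorem stmt9 {V : Type*} [Fintype V] (G : SimpleGraph V) (hconn : G.Connected)
    (hK13 : ¬ ContainsInduced G K13) (hZ2 : ¬ ContainsInduced G (Zgraph 2))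
    (hN : ¬ ContainsInduced G Ngraph)
    (w1 w2 w3 w4 w5 w6 : V) (D7 : Set V)
    (hws : List.Pairwise (· ≠ ·) [w1, w2, w3, w4, w5, w6])
    (hne7 : D7.Nonempty)
    (hw1 : w1 ∉ D7) (hw2 : w2 ∉ D7) (hw3 : w3 ∉ D7)
    (hw4 : w4 ∉ D7) (hw5 : w5 ∉ D7) (hw6 : w6 ∉ D7)
    (hind : ∀ u ∈ ({w1, w2, w3, w4, w5, w6} ∪ D7 : Set V),
      ∀ v ∈ ({w1, w2, w3, w4, w5, w6} ∪ D7 : Set V), u ≠ v →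
      (G.Adj u v ↔
        (u = w1 ∧ v = w3) ∨ (v = w1 ∧ u = w3) ∨
        (u = w3 ∧ v = w4) ∨ (v = w3 ∧ u = w4) ∨
        (u = w4 ∧ v = w2) ∨ (v = w4 ∧ u = w2) ∨
        (u = w2 ∧ v = w6) ∨ (v = w2 ∧ u = w6) ∨
        (u = w6 ∧ v = w5) ∨ (v = w6 ∧ u = w5) ∨
        (u = w5 ∧ v = w1) ∨ (v = w5 ∧ u = w1) ∨
        (u = w3 ∧ v ∈ D7) ∨ (v = w3 ∧ u ∈ D7) ∨
        (u = w4 ∧ v ∈ D7) ∨ (v = w4 ∧ u ∈ D7) ∨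
        (u = w5 ∧ v ∈ D7) ∨ (v = w5 ∧ u ∈ D7) ∨
        (u = w6 ∧ v ∈ D7) ∨ (v = w6 ∧ u ∈ D7) ∨
        (u ∈ D7 ∧ v ∈ D7)))
    (a : V) (ha : a ∉ ({w1, w2, w3, w4, w5, w6} ∪ D7 : Set V))
    (hnbr : ∃ b ∈ ({w1, w2, w3, w4, w5, w6} ∪ D7 : Set V), G.Adj a b) :
    -- (i)
    IsExpansionOf (G.induce (({w1, w2, w3, w4, w5, w6} ∪ D7 : Set V) ∪ {a})) HGraph5 {6} ∨
    -- (ii), i = 3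
    ((∀ x ∈ ({w1, w2, w3, w4, w5, w6} ∪ D7 : Set V),
        G.Adj a x ↔ (x = w1 ∨ x = w2 ∨ x = w3 ∨ x = w6)) ∧
      (∃ c, D7 = {c}) ∧
      Nonempty ((G.induce (({w1, w2, w3, w4, w5, w6} ∪ D7 : Set V) ∪ {a})) ≃g HGraph7)) ∨
    -- (ii), i = 4
    ((∀ x ∈ ({w1, w2, w3, w4, w5, w6} ∪ D7 : Set V),
        G.Adj a x ↔ (x = w1 ∨ x = w2 ∨ x = w4 ∨ x = w5)) ∧
      (∃ c, D7 = {c}) ∧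
      Nonempty ((G.induce (({w1, w2, w3, w4, w5, w6} ∪ D7 : Set V) ∪ {a})) ≃g HGraph7)) :=
  stmt9_general G hK13 hZ2 w1 w2 w3 w4 w5 w6 D7
    ⟨hws, hne7, ⟨hw1, hw2, hw3, hw4, hw5, hw6⟩, hind⟩ a ha hnbr
end
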